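/- Let k be a field of arbitrary characteristic, let A and B be polynomial rings over k in disjoint sets of variables, R = A ⊗_k B, and let I ⊆ A and J ⊆ B be nonzero proper monomial ideals. Then for all n ≥ 1: depth R/(I+J)^{(n)} = min over i ∈ [1, n−1] and j ∈ [1, n] of { depth A/I^{(n−i)} + depth B/J^{(i)} + 1, depth A/I^{(n−j+1)} + depth B/J^{(j)} }. -/

import Mathlib

/-! For a monomial ideal `Q` of `S = k[x_1, …, x_N]` the Koszul complex of the variables with
coefficients in `Q` has the `k`-basis `x^c e_F` with `x^c ∈ Q`, and `depth S/Q = N - 1 - p`, where `p`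
is the top degree of its homology (`depth_char`, from the depth sensitivity `rees` of the Koszul complex).
So the statement is about the Koszul homology of `(I + J)^{(n)}`.

The symbolic power `Q^{(n)}` of a monomial ideal is computed on exponents by localizing at the
minimal covers of the generators (`mon_symbPow`), and this gives the binomial expansion
`(I + J)^{(n)} = ∑_{s + t = n} I^{(s)} J^{(t)}` (`mem_symE_sumE`). Since the Koszul complex of all
the variables is the tensor product of those of the two sets of variables (`kosz_tensor_ex`), the
Koszul complex of `(I + J)^{(n)}` is the `n`-th step of the product of the filtrations by symbolic
powers.

Dividing a monomial of `Q^{(i + 1)}` by one of its variables yields a monomial of `Q^{(i)}`, in any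
characteristic. A contracting homotopy of the Koszul complex that divides by a chosen variable
therefore maps `Q^{(i + 1)}` into `Q^{(i)}` (`EFil.filt`), so the inclusions of consecutive symbolic
powers induce zero on Koszul homology. Write `p_i` and `q_j` for the top degrees of the homology of
`I^{(i)}` and `J^{(j)}`, with `p_0 = q_0 = 0`. For such filtrations the top degree of the homology
of the `n`-th step of the product is the maximum of `p_i + q_j` over `i + j = n` with `i, j ≥ 1`,
and of `p_i + q_j + 1` over `i + j = n + 1` with `i, j ≥ 1`. The upper bound (`Filt.ex_prod`) adjoins
the pieces `I^{(i)} J^{(n - i)}` one at a time, by Mayer–Vietoris and Künneth vanishing, the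
intersection of a piece with the previous ones being `I^{(i)} J^{(n - i + 1)}`. For the lower bound,
the classes `z ⊗ w` (`Filt.not_ex_prod`) and `z ⊗ h w ± h z ⊗ w` (`Filt.not_ex_prod_succ`) are
detected by tensor products of functionals that vanish on the next step of the filtration.
-/

open MvPolynomial TensorProduct

/-- The `n`-th symbolic power of an ideal `Q`:
`Q^{(n)} = ⋂_{P ∈ Min(Q)} (Q^n R_P ∩ R)`, the intersection over the minimal primes `P` of `Q`
of the contractions of `Q^n R_P` along the localization maps `R → R_P`. -/
noncomputable def symbPow {R : Type*} [CommRing R] (Q : Ideal R) (n : ℕ) : Ideal R :=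
  ⨅ (P : Ideal R) (hP : P ∈ Q.minimalPrimes),
    letI : P.IsPrime := hP.1.1
    Ideal.comap (algebraMap R (Localization.AtPrime P))
      (Ideal.map (algebraMap R (Localization.AtPrime P)) (Q ^ n))

/-- The depth of a module `M` with respect to an ideal `m`: the maximal length of an
`M`-regular sequence contained in `m`. -/
noncomputable def idealDepth {R : Type*} [CommRing R] (m : Ideal R)
    (M : Type*) [AddCommGroup M] [Module R M] : ℕ :=
  sSup {n | ∃ rs : List R, rs.length = n ∧ (∀ r ∈ rs, r ∈ m) ∧
    RingTheory.Sequence.IsRegular M rs}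

/-- The maximal homogeneous ideal of a polynomial ring, generated by the variables. -/
noncomputable def maxHomIdeal (k : Type*) [CommSemiring k] (σ : Type*) :
    Ideal (MvPolynomial σ k) :=
  Ideal.span (Set.range X)

/-- An ideal of a polynomial ring is homogeneous if it contains all homogeneous components of
each of its elements. -/
def IsHomogeneousIdeal {k σ : Type*} [CommSemiring k] (I : Ideal (MvPolynomial σ k)) : Prop :=
  ∀ f ∈ I, ∀ d : ℕ, homogeneousComponent d f ∈ I

/-- A monomial ideal: an ideal generated by monomials. -/
def IsMonomialIdeal {k σ : Type*} [CommSemiring k] (I : Ideal (MvPolynomial σ k)) : Prop :=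
  ∃ S : Set (σ →₀ ℕ), I = Ideal.span ((fun s => monomial s (1 : k)) '' S)

set_option linter.unusedSectionVars false

/-! ### Based chain complexes and their tensor products -/

/-- A chain complex of `k`-vector spaces with a homogeneous basis indexed by `α`: the total space
is `α →₀ k`, the basis vector `a` sits in degree `deg a`, and the differential `d` lowers the
degree by one. -/
structure BCx (k : Type) [Field k] (α : Type) where
  deg : α → ℕ
  d : Module.End k (α →₀ k)
  d_deg : ∀ a, d (Finsupp.single a 1) ∈ Finsupp.supported k k {b | deg b + 1 = deg a}
  d_d : d * d = 0

section Based

variable {k : Type} [Field k] {α β : Type}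

/-- A shortcut instance for endomorphisms of `α →₀ k`. -/
noncomputable instance instRingEndFinsupp : Ring (Module.End k (α →₀ k)) := Module.End.instRing

/-- Over a field, a linear map restricted to a subspace `P` has a linear generalized inverse with
values in `P`. -/
theorem exists_generalized_inverse {V : Type} [AddCommGroup V] [Module k V] (d : V →ₗ[k] V)
    (P : Submodule k V) : ∃ g : V →ₗ[k] P, ∀ v ∈ P, d (g (d v)) = d v := by
  obtain ⟨g, hg⟩ := LinearMap.exists_rightInverse_of_surjective (d.domRestrict P).rangeRestrict
      (LinearMap.range_rangeRestrict (d.domRestrict P))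
  obtain ⟨ρ, hρ⟩ := LinearMap.exists_extend g
  refine ⟨ρ, fun v hv => ?_⟩
  have h1 := congrArg (fun F => F ((d.domRestrict P).rangeRestrict ⟨v, hv⟩)) hρ
  have h2 := congrArg (fun F => F ((d.domRestrict P).rangeRestrict ⟨v, hv⟩)) hg
  have h3 : ρ (d v) = g ((d.domRestrict P).rangeRestrict ⟨v, hv⟩) := h1
  rw [h3]
  exact congrArg Subtype.val h2

theorem map_supported_of_single {L : (α →₀ k) →ₗ[k] (β →₀ k)} {Z : Set α} {Z' : Set β}
    (h : ∀ a ∈ Z, L (Finsupp.single a 1) ∈ Finsupp.supported k k Z') {u : α →₀ k}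
    (hu : u ∈ Finsupp.supported k k Z) : L u ∈ Finsupp.supported k k Z' := by
  rw [Finsupp.supported_eq_span_single] at hu
  have : Submodule.span k ((fun i => Finsupp.single i (1 : k)) '' Z) ≤
      (Finsupp.supported k k Z').comap L := by
    rw [Submodule.span_le]
    rintro _ ⟨a, ha, rfl⟩
    exact h a ha
  exact this hu

theorem eqOn_supported_of_single {M : Type} [AddCommGroup M] [Module k M]
    {L L' : (α →₀ k) →ₗ[k] M} {Z : Set α}
    (h : ∀ a ∈ Z, L (Finsupp.single a 1) = L' (Finsupp.single a 1)) {u : α →₀ k}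
    (hu : u ∈ Finsupp.supported k k Z) : L u = L' u := by
  rw [Finsupp.supported_eq_span_single] at hu
  have : Submodule.span k ((fun i => Finsupp.single i (1 : k)) '' Z) ≤
      LinearMap.eqLocus L L' := by
    rw [Submodule.span_le]
    rintro _ ⟨a, ha, rfl⟩
    exact h a ha
  exact this hu

theorem ext_single {M : Type} [AddCommGroup M] [Module k M]
    {L L' : (α →₀ k) →ₗ[k] M}
    (h : ∀ a, L (Finsupp.single a 1) = L' (Finsupp.single a 1)) : L = L' := by
  ext a
  simpa using h a

/-- The bilinear map `(u, v) ↦ u ⊗ v`, with `(α →₀ k) ⊗ (β →₀ k)` identified with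
`α × β →₀ k`. -/
noncomputable def tens : (α →₀ k) →ₗ[k] (β →₀ k) →ₗ[k] (α × β →₀ k) :=
  (TensorProduct.mk k (α →₀ k) (β →₀ k)).compr₂ (finsuppTensorFinsupp' k α β).toLinearMap

theorem tens_single (a : α) (b : β) :
    tens (Finsupp.single a (1 : k)) (Finsupp.single b 1) = Finsupp.single (a, b) 1 := by
  simp [tens]

/-- The tensor product `S ⊗ T` of two endomorphisms, acting on `α × β →₀ k`. -/
noncomputable def tmap (S : Module.End k (α →₀ k)) (T : Module.End k (β →₀ k)) :
    Module.End k (α × β →₀ k) :=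
  (finsuppTensorFinsupp' k α β).toLinearMap ∘ₗ TensorProduct.map S T ∘ₗ
    (finsuppTensorFinsupp' k α β).symm.toLinearMap

theorem tmap_tens (S : Module.End k (α →₀ k)) (T : Module.End k (β →₀ k)) (u : α →₀ k)
    (v : β →₀ k) : tmap S T (tens u v) = tens (S u) (T v) := by
  simp [tmap, tens]

theorem tmap_mul (S S' : Module.End k (α →₀ k)) (T T' : Module.End k (β →₀ k)) :
    tmap S T * tmap S' T' = tmap (S * S') (T * T') :=
  ext_single fun ⟨a, b⟩ => by
    simp [← tens_single, tmap_tens]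

theorem tmap_add_left (S S' : Module.End k (α →₀ k)) (T : Module.End k (β →₀ k)) :
    tmap (S + S') T = tmap S T + tmap S' T :=
  ext_single fun ⟨a, b⟩ => by
    simp [← tens_single, tmap_tens]

theorem tmap_add_right (S : Module.End k (α →₀ k)) (T T' : Module.End k (β →₀ k)) :
    tmap S (T + T') = tmap S T + tmap S T' :=
  ext_single fun ⟨a, b⟩ => by
    simp [← tens_single, tmap_tens]

theorem tmap_one : tmap (1 : Module.End k (α →₀ k)) (1 : Module.End k (β →₀ k)) = 1 :=
  ext_single fun ⟨a, b⟩ => by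
    simp [← tens_single, tmap_tens]

theorem tmap_zero_left (T : Module.End k (β →₀ k)) :
    tmap (0 : Module.End k (α →₀ k)) T = 0 :=
  ext_single fun ⟨a, b⟩ => by
    simp [← tens_single, tmap_tens]

theorem tmap_zero_right (S : Module.End k (α →₀ k)) :
    tmap S (0 : Module.End k (β →₀ k)) = 0 :=
  ext_single fun ⟨a, b⟩ => by
    simp [← tens_single, tmap_tens]

/-- The tensor product of two linear functionals. -/
noncomputable def tfun (φ : (α →₀ k) →ₗ[k] k) (ψ : (β →₀ k) →ₗ[k] k) :
    (α × β →₀ k) →ₗ[k] k :=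
  LinearMap.mul' k k ∘ₗ TensorProduct.map φ ψ ∘ₗ (finsuppTensorFinsupp' k α β).symm.toLinearMap

theorem tfun_tens (φ : (α →₀ k) →ₗ[k] k) (ψ : (β →₀ k) →ₗ[k] k) (u : α →₀ k) (v : β →₀ k) :
    tfun φ ψ (tens u v) = φ u * ψ v := by
  simp [tfun, tens]

theorem tens_mem_supported {U : Set α} {W : Set β} {u : α →₀ k} {v : β →₀ k}
    (hu : u ∈ Finsupp.supported k k U) (hv : v ∈ Finsupp.supported k k W) :
    tens u v ∈ Finsupp.supported k k (U ×ˢ W) := by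
  refine map_supported_of_single (L := tens.flip v) (fun a ha => ?_) hu
  refine map_supported_of_single (L := tens (Finsupp.single a 1)) (fun b hb => ?_) hv
  rw [tens_single]
  exact Finsupp.single_mem_supported k 1 ⟨ha, hb⟩

namespace BCx

variable (C : BCx k α) (C' : BCx k β)

/-- The basis vectors of degree `m` in `U`. -/
def gr (U : Set α) (m : ℕ) : Set α := {a | a ∈ U ∧ C.deg a = m}

/-- The span of `U` is a subcomplex. -/
def Sub (U : Set α) : Prop :=
  ∀ a ∈ U, C.d (Finsupp.single a 1) ∈ Finsupp.supported k k U

/-- The subcomplex spanned by `U` has no homology in degree `m`. -/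
def Ex (U : Set α) (m : ℕ) : Prop :=
  ∀ u ∈ Finsupp.supported k k (C.gr U m), C.d u = 0 →
    ∃ v ∈ Finsupp.supported k k (C.gr U (m + 1)), C.d v = u

/-- The sign operator `(-1)^deg`. -/
noncomputable def sg : Module.End k (α →₀ k) :=
  Finsupp.linearCombination k (fun a => Finsupp.single a ((-1) ^ C.deg a))

theorem sg_single (a : α) :
    C.sg (Finsupp.single a 1) = (-1 : k) ^ C.deg a • Finsupp.single a 1 := by
  simp [sg]

theorem sg_apply {m : ℕ} {u : α →₀ k} (hu : u ∈ Finsupp.supported k k {a | C.deg a = m}) :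
    C.sg u = (-1 : k) ^ m • u := by
  refine eqOn_supported_of_single (L := C.sg) (L' := (-1 : k) ^ m • LinearMap.id)
    (fun a ha => ?_) hu
  rw [sg_single, ha]
  simp

theorem d_d_apply (u : α →₀ k) : C.d (C.d u) = 0 := by
  have := congrArg (fun f => f u) C.d_d
  simpa using this

theorem sg_sg : C.sg * C.sg = 1 :=
  ext_single fun a => by
    rw [Module.End.mul_apply, sg_single, map_smul, sg_single, smul_smul, ← mul_pow]
    simp

theorem sg_d : C.sg * C.d = - (C.d * C.sg) :=
  ext_single fun a => by
    rw [LinearMap.neg_apply, Module.End.mul_apply, Module.End.mul_apply, sg_single, map_smul]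
    rcases Nat.eq_zero_or_pos (C.deg a) with h | h
    · have h0 := C.d_deg a
      rw [h] at h0
      simp only [Nat.add_eq_zero_iff, one_ne_zero, and_false, Set.ofPred_false,
        Finsupp.supported_empty, Submodule.mem_bot] at h0
      simp [h0]
    · obtain ⟨m, hm⟩ : ∃ m, C.deg a = m + 1 := ⟨C.deg a - 1, by omega⟩
      have h0 := C.d_deg a
      rw [hm] at h0
      rw [C.sg_apply (m := m) (by simpa using h0), hm, pow_succ]
      simp

theorem sg_odd {S : Module.End k (α →₀ k)}
    (hS : ∀ a, S (Finsupp.single a 1) ∈ Finsupp.supported k k {b | C.deg b = C.deg a + 1}) :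
    C.sg * S = - (S * C.sg) :=
  ext_single fun a => by
    rw [LinearMap.neg_apply, Module.End.mul_apply, Module.End.mul_apply, sg_single, map_smul,
      C.sg_apply (hS a), pow_succ]
    simp

theorem d_mem_supported {U : Set α} (hU : C.Sub U) {u : α →₀ k}
    (hu : u ∈ Finsupp.supported k k U) : C.d u ∈ Finsupp.supported k k U :=
  map_supported_of_single hU hu

theorem d_mem_gr {U : Set α} (hU : C.Sub U) {m : ℕ} {u : α →₀ k}
    (hu : u ∈ Finsupp.supported k k (C.gr U (m + 1))) :
    C.d u ∈ Finsupp.supported k k (C.gr U m) := by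
  refine map_supported_of_single (fun a ha => ?_) hu
  have h1 := hU a ha.1
  have h2 := C.d_deg a
  rw [ha.2] at h2
  have : C.gr U m = U ∩ {b | C.deg b + 1 = m + 1} := by
    ext b; simp [gr]
  rw [this, Finsupp.supported_inter]
  exact ⟨h1, h2⟩

theorem gr_mono {U U' : Set α} (h : U ⊆ U') (m : ℕ) :
    Finsupp.supported k k (C.gr U m) ≤ Finsupp.supported k k (C.gr U' m) :=
  Finsupp.supported_mono fun _ ha => ⟨h ha.1, ha.2⟩

theorem gr_le (U : Set α) (m : ℕ) :
    Finsupp.supported k k (C.gr U m) ≤ Finsupp.supported k k U :=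
  Finsupp.supported_mono fun _ ha => ha.1

/-- Projection onto degree `m`. -/
noncomputable def proj (m : ℕ) : Module.End k (α →₀ k) :=
  Finsupp.linearCombination k
    (fun a => by classical exact if C.deg a = m then Finsupp.single a 1 else 0)

theorem proj_single (m : ℕ) (a : α) :
    C.proj m (Finsupp.single a 1) = if C.deg a = m then Finsupp.single a 1 else 0 := by
  simp [proj]

theorem proj_of_mem {m : ℕ} {u : α →₀ k} (hu : u ∈ Finsupp.supported k k {a | C.deg a = m}) :
    C.proj m u = u := by
  refine eqOn_supported_of_single (L' := LinearMap.id) (fun a ha => ?_) hu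
  have ha' : C.deg a = m := ha
  rw [proj_single, if_pos ha']
  simp

theorem proj_of_ne {m m' : ℕ} (hm : m ≠ m') {u : α →₀ k}
    (hu : u ∈ Finsupp.supported k k {a | C.deg a = m}) :
    C.proj m' u = 0 := by
  refine eqOn_supported_of_single (L' := 0) (fun a ha => ?_) hu
  rw [proj_single, if_neg (by rw [show C.deg a = m from ha]; exact hm)]
  simp

theorem proj_d (m : ℕ) : C.proj m * C.d = C.d * C.proj (m + 1) :=
  ext_single fun a => by
    rw [Module.End.mul_apply, Module.End.mul_apply, proj_single]
    split_ifs with h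
    · apply C.proj_of_mem
      have := C.d_deg a
      rw [h] at this
      simpa using this
    · rw [map_zero]
      rcases Nat.eq_zero_or_pos (C.deg a) with h' | h'
      · have h0 := C.d_deg a
        rw [h'] at h0
        simp only [Nat.add_eq_zero_iff, one_ne_zero, and_false, Set.ofPred_false,
          Finsupp.supported_empty, Submodule.mem_bot] at h0
        simp [h0]
      · obtain ⟨l, hl⟩ : ∃ l, C.deg a = l + 1 := ⟨C.deg a - 1, by omega⟩
        have h0 := C.d_deg a
        rw [hl] at h0
        exact C.proj_of_ne (m := l) (by omega) (by simpa using h0)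

theorem proj_mem {U : Set α} (m : ℕ) {u : α →₀ k} (hu : u ∈ Finsupp.supported k k U) :
    C.proj m u ∈ Finsupp.supported k k (C.gr U m) := by
  refine map_supported_of_single (fun a ha => ?_) hu
  rw [proj_single]
  split_ifs with h
  · exact Finsupp.single_mem_supported k 1 ⟨ha, h⟩
  · exact Submodule.zero_mem _

/-- A homogeneous cycle that bounds at all bounds a homogeneous chain. -/
theorem exists_gr_of_boundary {U : Set α} {m : ℕ} {u : α →₀ k}
    (hu : u ∈ Finsupp.supported k k (C.gr U m)) {v : α →₀ k}
    (hv : v ∈ Finsupp.supported k k U) (hvu : C.d v = u) :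
    ∃ v ∈ Finsupp.supported k k (C.gr U (m + 1)), C.d v = u := by
  refine ⟨C.proj (m + 1) v, C.proj_mem _ hv, ?_⟩
  have := congrArg (fun f => f v) (C.proj_d m)
  simp only [Module.End.mul_apply] at this
  rw [← this, hvu]
  exact C.proj_of_mem (Finsupp.supported_mono (fun a ha => ha.2) hu)

/-- The tensor product of two based complexes, with the usual sign rule
`d (u ⊗ v) = d u ⊗ v + (-1)^deg u • u ⊗ d v`. -/
noncomputable def tensor : BCx k (α × β) where
  deg p := C.deg p.1 + C'.deg p.2
  d := tmap C.d 1 + tmap C.sg C'.d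
  d_deg := by
    rintro ⟨a, b⟩
    rw [← tens_single, LinearMap.add_apply, tmap_tens, tmap_tens, sg_single, map_smul]
    refine Submodule.add_mem _ ?_ (Submodule.smul_mem _ _ ?_)
    · refine Finsupp.supported_mono ?_
        (tens_mem_supported (C.d_deg a) (Finsupp.single_mem_supported k 1 (Set.mem_singleton b)))
      rintro ⟨a', b'⟩ ⟨h1, h2⟩
      simp only [Set.mem_ofPred_eq, Set.mem_singleton_iff] at h1 h2 ⊢
      subst h2; omega
    · refine Finsupp.supported_mono ?_
        (tens_mem_supported (Finsupp.single_mem_supported k 1 (Set.mem_singleton a)) (C'.d_deg b))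
      rintro ⟨a', b'⟩ ⟨h1, h2⟩
      simp only [Set.mem_ofPred_eq, Set.mem_singleton_iff] at h1 h2 ⊢
      subst h1; omega
  d_d := by
    have : tmap C.d 1 * tmap C.sg C'.d + tmap C.sg C'.d * tmap C.d 1 = 0 := by
      rw [tmap_mul, tmap_mul, sg_d, one_mul, mul_one, ← tmap_add_left]
      simp [tmap_zero_left]
    rw [add_mul, mul_add, mul_add, tmap_mul C.d C.d, C.d_d, tmap_zero_left,
      tmap_mul C.sg C.sg C'.d, C'.d_d, tmap_zero_right, zero_add, add_zero, this]

theorem tensor_d_tens (u : α →₀ k) (v : β →₀ k) :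
    (C.tensor C').d (tens u v) = tens (C.d u) v + tens (C.sg u) (C'.d v) := by
  simp [tensor, tmap_tens]

theorem tens_mem_gr {U : Set α} {W : Set β} {V : Set (α × β)} (hV : U ×ˢ W ⊆ V) {p q : ℕ}
    {u : α →₀ k} {v : β →₀ k} (hu : u ∈ Finsupp.supported k k (C.gr U p))
    (hv : v ∈ Finsupp.supported k k (C'.gr W q)) :
    tens u v ∈ Finsupp.supported k k ((C.tensor C').gr V (p + q)) := by
  refine Finsupp.supported_mono ?_ (tens_mem_supported hu hv)
  rintro ⟨a, b⟩ ⟨ha, hb⟩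
  refine ⟨hV ⟨ha.1, hb.1⟩, ?_⟩
  change C.deg a + C'.deg b = p + q
  rw [ha.2, hb.2]

theorem sub_prod {U : Set α} {W : Set β} (hU : C.Sub U) (hW : C'.Sub W) :
    (C.tensor C').Sub (U ×ˢ W) := by
  rintro ⟨a, b⟩ ⟨ha, hb⟩
  rw [← tens_single, tensor_d_tens, sg_single, map_smul]
  exact Submodule.add_mem _
    (tens_mem_supported (hU a ha) (Finsupp.single_mem_supported k 1 hb))
    (Submodule.smul_mem _ _ (tens_mem_supported (Finsupp.single_mem_supported k 1 ha) (hW b hb)))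

/-! ### The Künneth vanishing theorem -/

/-- If the subcomplex spanned by `U` is exact above degree `p`, there is a contracting homotopy `S`
for it above degree `p`. -/
theorem exists_homotopy {U : Set α} (hU : C.Sub U) {p : ℕ} (hp : ∀ m, p < m → C.Ex U m) :
    ∃ S : Module.End k (α →₀ k),
      (∀ a, S (Finsupp.single a 1) ∈ Finsupp.supported k k (C.gr U (C.deg a + 1))) ∧
      ∀ a ∈ U, p < C.deg a →
        C.d (S (Finsupp.single a 1)) + S (C.d (Finsupp.single a 1)) = Finsupp.single a 1 := by
  -- in each degree, a linear right inverse of the differential onto the boundaries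
  have key : ∀ m, ∃ ρ : (α →₀ k) →ₗ[k] Finsupp.supported k k (C.gr U (m + 1)),
      ∀ v ∈ Finsupp.supported k k (C.gr U (m + 1)), C.d (ρ (C.d v)) = C.d v :=
    fun m => exists_generalized_inverse (V := α →₀ k) C.d _
  choose ρ hρ using key
  let R : Module.End k (α →₀ k) :=
    Finsupp.linearCombination k (fun a => (ρ (C.deg a) (Finsupp.single a 1) : α →₀ k))
  have hR : ∀ m, ∀ u ∈ Finsupp.supported k k {a | C.deg a = m}, R u = ρ m u := by
    intro m u hu
    refine eqOn_supported_of_single (L := R)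
      (L' := (Finsupp.supported k k (C.gr U (m + 1))).subtype ∘ₗ ρ m) (fun a ha => ?_) hu
    have ha : C.deg a = m := ha
    subst ha
    simp [R]
  have hmem : ∀ m, ∀ u ∈ Finsupp.supported k k {a | C.deg a = m},
      R u ∈ Finsupp.supported k k (C.gr U (m + 1)) := fun m u hu => by
    rw [hR m u hu]; exact (ρ m u).2
  have hdR : ∀ m, ∀ v ∈ Finsupp.supported k k (C.gr U (m + 1)), C.d (R (C.d v)) = C.d v := by
    intro m v hv
    rw [hR m _ (Finsupp.supported_mono (fun a ha => ha.2) (C.d_mem_gr hU hv)), hρ m v hv]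
  have hdeg : ∀ U m, Finsupp.supported k k (C.gr U m) ≤ Finsupp.supported k k {a | C.deg a = m} :=
    fun U m => Finsupp.supported_mono (fun a ha => ha.2)
  have hs : ∀ a, Finsupp.single a (1 : k) ∈ Finsupp.supported k k {b | C.deg b = C.deg a} :=
    fun a => Finsupp.single_mem_supported k 1 rfl
  have hRd : ∀ a, R (C.d (Finsupp.single a 1)) ∈ Finsupp.supported k k (C.gr U (C.deg a)) := by
    intro a
    rcases Nat.eq_zero_or_pos (C.deg a) with h | h
    · have h0 := C.d_deg a
      rw [h] at h0
      simp only [Nat.add_eq_zero_iff, one_ne_zero, and_false, Set.ofPred_false,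
        Finsupp.supported_empty, Submodule.mem_bot] at h0
      simp [h0]
    · obtain ⟨l, hl⟩ : ∃ l, C.deg a = l + 1 := ⟨C.deg a - 1, by omega⟩
      have h0 := C.d_deg a
      rw [hl] at h0 ⊢
      exact hmem l _ (by simpa using h0)
  refine ⟨R - R * R * C.d, fun a => ?_, fun a ha hpa => ?_⟩
  · simp only [LinearMap.sub_apply, Module.End.mul_apply]
    exact Submodule.sub_mem _ (hmem _ _ (hs a)) (hmem _ _ (hdeg _ _ (hRd a)))
  · simp only [LinearMap.sub_apply, Module.End.mul_apply, C.d_d_apply, map_zero, sub_zero]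
    obtain ⟨l, hl⟩ : ∃ l, C.deg a = l + 1 := ⟨C.deg a - 1, by omega⟩
    have hag : Finsupp.single a (1 : k) ∈ Finsupp.supported k k (C.gr U (l + 1)) :=
      Finsupp.single_mem_supported k 1 ⟨ha, hl⟩
    have hy : Finsupp.single a (1 : k) - R (C.d (Finsupp.single a 1)) ∈
        Finsupp.supported k k (C.gr U (l + 1)) :=
      Submodule.sub_mem _ hag (by simpa [hl] using hRd a)
    obtain ⟨v, hv, hvy⟩ := hp (l + 1) (by omega) _ hy (by
      rw [map_sub, hdR l _ hag, sub_self])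
    have := hdR (l + 1) v hv
    rw [hvy] at this
    rw [← map_sub R, this]
    abel

/-- Künneth vanishing: if two complexes are exact above degrees `p` and `q`, then their tensor
product is exact above degree `p + q`. -/
theorem ex_prod {U : Set α} {W : Set β} (hU : C.Sub U) (hW : C'.Sub W) {p q : ℕ}
    (hp : ∀ m, p < m → C.Ex U m) (hq : ∀ m, q < m → C'.Ex W m) {m : ℕ} (hm : p + q < m) :
    (C.tensor C').Ex (U ×ˢ W) m := by
  obtain ⟨S, hS, hSU⟩ := C.exists_homotopy hU hp
  obtain ⟨S', hS', hSW⟩ := C'.exists_homotopy hW hq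
  have hSo : C.sg * S = - (S * C.sg) :=
    C.sg_odd fun a => Finsupp.supported_mono (fun b hb => hb.2) (hS a)
  obtain ⟨e, he⟩ : ∃ e, e = 1 - C.d * S - S * C.d := ⟨_, rfl⟩
  obtain ⟨e', he'⟩ : ∃ e', e' = 1 - C'.d * S' - S' * C'.d := ⟨_, rfl⟩
  have hed : e * C.d = C.d * e := by
    rw [he]
    simp only [sub_mul, mul_sub, one_mul, mul_one, mul_assoc, C.d_d, mul_zero, sub_zero]
    rw [← mul_assoc C.d C.d, C.d_d]; simp
  have hes : C.sg * e = e * C.sg := by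
    have h1 : C.sg * (C.d * S) = C.d * S * C.sg := by
      rw [← mul_assoc, sg_d, neg_mul, mul_assoc, hSo]; simp [mul_assoc]
    have h2 : C.sg * (S * C.d) = S * C.d * C.sg := by
      rw [← mul_assoc, hSo, neg_mul, mul_assoc, sg_d]; simp [mul_assoc]
    rw [he]
    simp only [sub_mul, mul_sub, one_mul, mul_one, h1, h2]
  have hd : (C.tensor C').d = tmap C.d 1 + tmap C.sg C'.d := rfl
  set H := tmap S 1 + tmap (C.sg * e) S' with hH
  -- `H` is a homotopy from the identity to `e ⊗ e'`
  have hDH : (C.tensor C').d * H + H * (C.tensor C').d + tmap e e' = 1 := by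
    have e1 : C.d * (C.sg * e) = - (C.sg * e * C.d) := by
      rw [mul_assoc, hed, ← mul_assoc, ← mul_assoc, sg_d]; simp
    have e2 : C.sg * (C.sg * e) = e := by rw [← mul_assoc, sg_sg, one_mul]
    have e3 : C.sg * e * C.sg = e := by rw [hes, mul_assoc, sg_sg, mul_one]
    have z1 : tmap (C.sg * S) C'.d + tmap (S * C.sg) C'.d = 0 := by
      rw [← tmap_add_left, hSo]; simp [tmap_zero_left]
    have z2 : tmap (C.d * (C.sg * e)) S' + tmap (C.sg * e * C.d) S' = 0 := by
      rw [← tmap_add_left, e1]; simp [tmap_zero_left]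
    have z3 : tmap (C.d * S) 1 + tmap (S * C.d) 1 + tmap e 1 = (1 : Module.End k (α × β →₀ k)) := by
      rw [← tmap_add_left, ← tmap_add_left, he, ← tmap_one]
      congr 1; abel
    have z4 : tmap e (C'.d * S') + tmap e (S' * C'.d) + tmap e e' = tmap e 1 := by
      rw [← tmap_add_right, ← tmap_add_right, he']
      congr 1; abel
    rw [hd, hH]
    simp only [add_mul, mul_add, tmap_mul, one_mul, mul_one, e2, e3]
    calc _ = (tmap (C.sg * S) C'.d + tmap (S * C.sg) C'.d) +
          (tmap (C.d * (C.sg * e)) S' + tmap (C.sg * e * C.d) S') +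
          (tmap (C.d * S) 1 + tmap (S * C.d) 1 +
            (tmap e (C'.d * S') + tmap e (S' * C'.d) + tmap e e')) := by abel
      _ = 1 := by rw [z1, z2, z4, z3, zero_add, zero_add]
  intro z hz hdz
  have hz0 : tmap e e' z = 0 := by
    refine eqOn_supported_of_single (L' := 0) ?_ hz
    rintro ⟨a, b⟩ ⟨⟨ha, hb⟩, hab⟩
    have hab : C.deg a + C'.deg b = m := hab
    rw [← tens_single, tmap_tens]
    rcases Nat.lt_or_ge p (C.deg a) with h | h
    · have : e (Finsupp.single a 1) = 0 := by
        have := hSU a ha h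
        rw [he]
        simp only [LinearMap.sub_apply, Module.End.mul_apply, Module.End.one_apply]
        rw [sub_sub, this, sub_self]
      simp [this]
    · have : e' (Finsupp.single b 1) = 0 := by
        have := hSW b hb (by omega)
        rw [he']
        simp only [LinearMap.sub_apply, Module.End.mul_apply, Module.End.one_apply]
        rw [sub_sub, this, sub_self]
      simp [this]
  have hHz : H z ∈ Finsupp.supported k k (U ×ˢ W) := by
    have hSm : ∀ u ∈ Finsupp.supported k k U, S u ∈ Finsupp.supported k k U := fun u hu =>
      map_supported_of_single (fun a _ => C.gr_le _ _ (hS a)) hu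
    have hSm' : ∀ u ∈ Finsupp.supported k k W, S' u ∈ Finsupp.supported k k W := fun u hu =>
      map_supported_of_single (fun a _ => C'.gr_le _ _ (hS' a)) hu
    have hsgm : ∀ u ∈ Finsupp.supported k k U, C.sg u ∈ Finsupp.supported k k U := fun u hu =>
      map_supported_of_single (fun a ha => by
        rw [sg_single]
        exact Submodule.smul_mem _ _ (Finsupp.single_mem_supported k 1 ha)) hu
    refine map_supported_of_single ?_ ((C.tensor C').gr_le _ _ hz)
    rintro ⟨a, b⟩ ⟨ha, hb⟩
    have ha' := Finsupp.single_mem_supported k (1 : k) ha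
    have hb' := Finsupp.single_mem_supported k (1 : k) hb
    rw [← tens_single, hH, LinearMap.add_apply, tmap_tens, tmap_tens]
    refine Submodule.add_mem _ (tens_mem_supported (hSm _ ha') hb')
      (tens_mem_supported (hsgm _ ?_) (hSm' _ hb'))
    rw [he]
    simp only [LinearMap.sub_apply, Module.End.mul_apply, Module.End.one_apply]
    exact Submodule.sub_mem _ (Submodule.sub_mem _ ha' (C.d_mem_supported hU (hSm _ ha')))
      (hSm _ (C.d_mem_supported hU ha'))
  refine (C.tensor C').exists_gr_of_boundary hz hHz ?_
  have := congrArg (fun f => f z) hDH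
  simp only [LinearMap.add_apply, Module.End.mul_apply, hdz, map_zero, add_zero, hz0,
    Module.End.one_apply] at this
  exact this

end BCx
end Based

/-! ### Homology of a product of filtrations -/

section Filt

variable {k : Type} [Field k] {α β : Type}

/-- A decreasing filtration `U 0 = everything ⊇ U 1 ⊇ ⋯` of a based complex by based subcomplexes,
together with a contracting homotopy `h` of `U 1` that lowers the filtration by at most one. In
particular each inclusion `U (i + 1) ⊆ U i` induces zero on homology. -/
structure Filt (C : BCx k α) where
  U : ℕ → Set α
  anti : Antitone U
  zero : U 0 = Set.univ
  sub : ∀ i, C.Sub (U i)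
  h : Module.End k (α →₀ k)
  h_deg : ∀ a, h (Finsupp.single a 1) ∈ Finsupp.supported k k {b | C.deg b = C.deg a + 1}
  h_mem : ∀ i, ∀ a ∈ U (i + 1), h (Finsupp.single a 1) ∈ Finsupp.supported k k (U i)
  homotopy : ∀ a ∈ U 1,
    C.d (h (Finsupp.single a 1)) + h (C.d (Finsupp.single a 1)) = Finsupp.single a 1

namespace Filt

variable {C : BCx k α} {C' : BCx k β} (𝓕 : Filt C) (𝓖 : Filt C')

/-- The product filtration: `V n = ⋃_{s + t = n} U s × W t`. -/
def prod (n : ℕ) : Set (α × β) := {p | ∃ s t, s + t = n ∧ p.1 ∈ 𝓕.U s ∧ p.2 ∈ 𝓖.U t}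

theorem h_apply_mem (i : ℕ) {u : α →₀ k} (hu : u ∈ Finsupp.supported k k (𝓕.U (i + 1))) :
    𝓕.h u ∈ Finsupp.supported k k (𝓕.U i) :=
  map_supported_of_single (𝓕.h_mem i) hu

theorem h_apply_gr (i m : ℕ) {u : α →₀ k}
    (hu : u ∈ Finsupp.supported k k (C.gr (𝓕.U (i + 1)) m)) :
    𝓕.h u ∈ Finsupp.supported k k (C.gr (𝓕.U i) (m + 1)) := by
  have h1 := 𝓕.h_apply_mem i (C.gr_le _ _ hu)
  have h2 : 𝓕.h u ∈ Finsupp.supported k k {a | C.deg a = m + 1} := by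
    refine map_supported_of_single (fun a ha => ?_) hu
    have := 𝓕.h_deg a
    rwa [ha.2] at this
  have : C.gr (𝓕.U i) (m + 1) = 𝓕.U i ∩ {a | C.deg a = m + 1} := rfl
  rw [this, Finsupp.supported_inter]
  exact ⟨h1, h2⟩

theorem homotopy_apply {u : α →₀ k} (hu : u ∈ Finsupp.supported k k (𝓕.U 1)) :
    C.d (𝓕.h u) + 𝓕.h (C.d u) = u :=
  eqOn_supported_of_single (L := C.d * 𝓕.h + 𝓕.h * C.d) (L' := LinearMap.id)
    (fun a ha => 𝓕.homotopy a ha) hu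

theorem mono {i j : ℕ} (hij : i ≤ j) :
    Finsupp.supported k k (𝓕.U j) ≤ Finsupp.supported k k (𝓕.U i) :=
  Finsupp.supported_mono (𝓕.anti hij)

/-- A nontrivial homology class of `U i` in degree `p` is represented by a cycle `z` and detected
by a cocycle `φ` which moreover vanishes on `U (i + 1)`. -/
theorem exists_class {i p : ℕ} (hi : 1 ≤ i) (h : ¬ C.Ex (𝓕.U i) p) :
    ∃ (z : α →₀ k) (φ : (α →₀ k) →ₗ[k] k), z ∈ Finsupp.supported k k (C.gr (𝓕.U i) p) ∧
      C.d z = 0 ∧ φ z ≠ 0 ∧ (∀ y ∈ Finsupp.supported k k (𝓕.U (i + 1)), φ y = 0) ∧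
      (∀ y ∈ Finsupp.supported k k (𝓕.U i), φ (C.d y) = 0) := by
  simp only [BCx.Ex, not_forall] at h
  obtain ⟨z, hz, hdz, hne⟩ := h
  have hnot : z ∉ (Finsupp.supported k k (𝓕.U i)).map C.d := by
    rintro ⟨v, hv, hvz⟩
    exact hne (C.exists_gr_of_boundary hz hv hvz)
  obtain ⟨φ, hφz, hφ⟩ := Submodule.exists_dual_map_eq_bot_of_notMem hnot inferInstance
  have hφ' : ∀ y ∈ Finsupp.supported k k (𝓕.U i), φ (C.d y) = 0 := by
    intro y hy
    have : φ (C.d y) ∈ Submodule.map φ ((Finsupp.supported k k (𝓕.U i)).map C.d) :=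
      ⟨_, ⟨y, hy, rfl⟩, rfl⟩
    rwa [hφ, Submodule.mem_bot] at this
  refine ⟨z, φ ∘ₗ C.d ∘ₗ 𝓕.h, hz, hdz, ?_, fun y hy => ?_, fun y hy => ?_⟩
  · have := 𝓕.homotopy_apply (𝓕.mono hi (C.gr_le _ _ hz))
    rw [hdz, map_zero, add_zero] at this
    simpa [this] using hφz
  · exact hφ' _ (𝓕.h_apply_mem i hy)
  · have := 𝓕.homotopy_apply (𝓕.mono hi (C.d_mem_supported (𝓕.sub i) hy))
    rw [C.d_d_apply, map_zero, add_zero] at this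
    simp only [LinearMap.comp_apply, this]
    exact hφ' y hy

theorem prod_subset {s t n : ℕ} (h : s + t = n) : 𝓕.U s ×ˢ 𝓖.U t ⊆ 𝓕.prod 𝓖 n :=
  fun _ hp => ⟨s, t, h, hp.1, hp.2⟩

theorem not_ex_of_functional {V : Set α} {m : ℕ} {z : α →₀ k}
    (hz : z ∈ Finsupp.supported k k (C.gr V m)) (hdz : C.d z = 0) (Φ : (α →₀ k) →ₗ[k] k)
    (hΦz : Φ z ≠ 0) (hΦ : ∀ a ∈ V, Φ (C.d (Finsupp.single a 1)) = 0) : ¬ C.Ex V m := by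
  intro h
  obtain ⟨v, hv, hvz⟩ := h z hz hdz
  apply hΦz
  rw [← hvz]
  exact eqOn_supported_of_single (L := Φ ∘ₗ C.d) (L' := 0) hΦ (C.gr_le _ _ hv)

/-- The Künneth classes `z ⊗ w` survive in the product filtration. -/
theorem not_ex_prod {i j p q : ℕ} (hi : 1 ≤ i) (hj : 1 ≤ j) (hp : ¬ C.Ex (𝓕.U i) p)
    (hq : ¬ C'.Ex (𝓖.U j) q) : ¬ (C.tensor C').Ex (𝓕.prod 𝓖 (i + j)) (p + q) := by
  obtain ⟨z, φ, hz, hdz, hφz, hφ1, hφ2⟩ := 𝓕.exists_class hi hp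
  obtain ⟨w, ψ, hw, hdw, hψw, hψ1, hψ2⟩ := 𝓖.exists_class hj hq
  refine not_ex_of_functional (z := tens z w)
    (C.tens_mem_gr C' (𝓕.prod_subset 𝓖 rfl) hz hw) ?_ (tfun φ ψ) ?_ ?_
  · rw [C.tensor_d_tens, hdz, hdw]; simp
  · rw [tfun_tens]; exact mul_ne_zero hφz hψw
  · rintro ⟨a, b⟩ ⟨s, t, hst, ha, hb⟩
    have ha' := Finsupp.single_mem_supported k (1 : k) ha
    have hb' := Finsupp.single_mem_supported k (1 : k) hb
    rw [← tens_single, C.tensor_d_tens, C.sg_single, map_smul, LinearMap.smul_apply, map_add,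
      map_smul, tfun_tens, tfun_tens]
    rcases lt_trichotomy s i with h | h | h
    · rw [hψ1 _ (𝓖.mono (by omega) hb'), hψ2 _ (𝓖.mono (by omega) hb')]; simp
    · rw [hφ2 _ (𝓕.mono (by omega) ha'), hψ2 _ (𝓖.mono (by omega) hb')]; simp
    · rw [hφ1 _ (𝓕.mono (by omega) ha'), hφ2 _ (𝓕.mono (by omega) ha')]; simp

/-- The torsion part of the Künneth formula: the classes `z ⊗ h w ± h z ⊗ w` survive in the product
filtration. -/
theorem not_ex_prod_succ {i j p q n : ℕ} (hi : 1 ≤ i) (hj : 1 ≤ j) (hn : i + j = n + 1)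
    (hp : ¬ C.Ex (𝓕.U i) p) (hq : ¬ C'.Ex (𝓖.U j) q) :
    ¬ (C.tensor C').Ex (𝓕.prod 𝓖 n) (p + q + 1) := by
  obtain ⟨z, φ, hz, hdz, hφz, hφ1, hφ2⟩ := 𝓕.exists_class hi hp
  obtain ⟨w, ψ, hw, hdw, hψw, hψ1, hψ2⟩ := 𝓖.exists_class hj hq
  obtain ⟨i, rfl⟩ : ∃ i', i = i' + 1 := ⟨i - 1, by omega⟩
  obtain ⟨j, rfl⟩ : ∃ j', j = j' + 1 := ⟨j - 1, by omega⟩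
  have e1 : C.d (𝓕.h z) = z := by
    simpa [hdz] using 𝓕.homotopy_apply (𝓕.mono hi (C.gr_le _ _ hz))
  have e2 : C'.d (𝓖.h w) = w := by
    simpa [hdw] using 𝓖.homotopy_apply (𝓖.mono hj (C'.gr_le _ _ hw))
  have hsz : C.sg z = (-1 : k) ^ p • z :=
    C.sg_apply (Finsupp.supported_mono (fun a ha => ha.2) hz)
  refine not_ex_of_functional
    (z := tens z (𝓖.h w) - (-1 : k) ^ p • tens (𝓕.h z) w)
    (Submodule.sub_mem _ ?_ (Submodule.smul_mem _ _ ?_)) ?_ (tfun φ (ψ ∘ₗ C'.d)) ?_ ?_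
  · exact C.tens_mem_gr C' (p := p) (q := q + 1)
      (𝓕.prod_subset 𝓖 (s := i + 1) (t := j) (by omega)) hz
      (𝓖.h_apply_gr j q hw)
  · have := C.tens_mem_gr C' (𝓕.prod_subset 𝓖 (s := i) (t := j + 1) (n := n) (by omega)) (𝓕.h_apply_gr i p hz) hw
    rwa [show p + 1 + q = p + q + 1 by omega] at this
  · rw [map_sub, map_smul, C.tensor_d_tens, C.tensor_d_tens, hdz, hdw, e1, e2, hsz]; simp
  · rw [map_sub, map_smul, tfun_tens, tfun_tens, LinearMap.comp_apply, LinearMap.comp_apply, e2,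
      hdw]
    simpa using ⟨hφz, hψw⟩
  · rintro ⟨a, b⟩ ⟨s, t, hst, ha, hb⟩
    have ha' := Finsupp.single_mem_supported k (1 : k) ha
    have hb' := Finsupp.single_mem_supported k (1 : k) hb
    rw [← tens_single, C.tensor_d_tens, C.sg_single, map_smul, LinearMap.smul_apply, map_add,
      map_smul, tfun_tens, tfun_tens, LinearMap.comp_apply, LinearMap.comp_apply, C'.d_d_apply]
    rcases lt_or_ge s (i + 1) with h | h
    · rw [hψ2 _ (𝓖.mono (by omega) hb')]; simp
    · rw [hφ2 _ (𝓕.mono h ha')]; simp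

/-- Vanishing for the product filtration, by adjoining the pieces `U t × W (n - t)` one at a time.
The intersection of a new piece with the previous ones is `U t × W (n - t + 1)`. -/
theorem ex_prod {n M : ℕ} (p q : ℕ → ℕ) (hp : ∀ i m, p i < m → C.Ex (𝓕.U i) m)
    (hq : ∀ j m, q j < m → C'.Ex (𝓖.U j) m) (h1 : ∀ i j, i + j = n → p i + q j ≤ M)
    (h2 : ∀ i j, 1 ≤ i → 1 ≤ j → i + j = n + 1 → p i + q j + 1 ≤ M) {m : ℕ} (hm : M < m) :
    (C.tensor C').Ex (𝓕.prod 𝓖 n) m := by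
  -- the part of the filtration in which the first index is at most `t`
  set Q : ℕ → Set (α × β) := fun t =>
    {x | ∃ s r, s ≤ t ∧ s + r = n ∧ x.1 ∈ 𝓕.U s ∧ x.2 ∈ 𝓖.U r} with hQ
  have hQsub : ∀ t, (C.tensor C').Sub (Q t) := by
    rintro t ⟨a, b⟩ ⟨s, r, hs, hsr, ha, hb⟩
    refine Finsupp.supported_mono ?_
      (C.sub_prod C' (𝓕.sub s) (𝓖.sub r) (a, b) ⟨ha, hb⟩)
    exact fun x hx => ⟨s, r, hs, hsr, hx.1, hx.2⟩
  have key : ∀ t, t ≤ n → ∀ m, M < m → (C.tensor C').Ex (Q t) m := by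
    intro t
    induction t with
    | zero =>
      intro _ m hm
      have : Q 0 = 𝓕.U 0 ×ˢ 𝓖.U n := by
        ext ⟨a, b⟩
        constructor
        · rintro ⟨s, r, hs, hsr, ha, hb⟩
          obtain rfl : s = 0 := by omega
          obtain rfl : r = n := by omega
          exact ⟨ha, hb⟩
        · exact fun h => ⟨0, n, le_rfl, by omega, h.1, h.2⟩
      rw [this]
      exact C.ex_prod C' (𝓕.sub 0) (𝓖.sub n) (hp 0) (hq n)
        (lt_of_le_of_lt (h1 0 n (by omega)) hm)
    | succ t ih =>
      intro ht m hm z hz hdz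
      -- split `z` into a chain on the old part and a chain on the new piece
      set P : Set (α × β) := 𝓕.U (t + 1) ×ˢ 𝓖.U (n - (t + 1)) with hP
      have hQu : (C.tensor C').gr (Q (t + 1)) m ⊆
          (C.tensor C').gr (Q t) m ∪ (C.tensor C').gr P m := by
        rintro ⟨a, b⟩ ⟨⟨s, r, hs, hsr, ha, hb⟩, hd⟩
        rcases Nat.lt_or_ge t s with h | h
        · obtain rfl : s = t + 1 := by omega
          obtain rfl : r = n - (t + 1) := by omega
          exact Or.inr ⟨⟨ha, hb⟩, hd⟩
        · exact Or.inl ⟨⟨s, r, h, hsr, ha, hb⟩, hd⟩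
      have hz' := Finsupp.supported_mono (R := k) (M := k) hQu hz
      rw [Finsupp.supported_union] at hz'
      obtain ⟨x, hx, y, hy, rfl⟩ := Submodule.mem_sup.1 hz'
      have hPsub : (C.tensor C').Sub P := C.sub_prod C' (𝓕.sub _) (𝓖.sub _)
      have hPQ : P ⊆ Q (t + 1) := fun x hx => ⟨t + 1, _, le_rfl, by omega, hx.1, hx.2⟩
      have hQQ : Q t ⊆ Q (t + 1) := fun x ⟨s, r, hs, hsr, ha, hb⟩ =>
        ⟨s, r, by omega, hsr, ha, hb⟩
      obtain ⟨m, rfl⟩ : ∃ m', m = m' + 1 := ⟨m - 1, by omega⟩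
      have hdxy : (C.tensor C').d y = - (C.tensor C').d x := by
        rw [map_add] at hdz
        exact eq_neg_of_add_eq_zero_right hdz
      set P' : Set (α × β) := 𝓕.U (t + 1) ×ˢ 𝓖.U (n - t) with hP'
      have hdy : (C.tensor C').d y ∈ Finsupp.supported k k ((C.tensor C').gr P' m) := by
        have i1 := (C.tensor C').d_mem_gr hPsub hy
        have i2 := Submodule.neg_mem _ ((C.tensor C').d_mem_gr (hQsub t) hx)
        rw [← hdxy] at i2
        have : (C.tensor C').gr P m ∩ (C.tensor C').gr (Q t) m ⊆ (C.tensor C').gr P' m := by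
          rintro ⟨a, b⟩ ⟨⟨⟨ha, hb⟩, hd⟩, ⟨⟨s, r, hs, hsr, ha', hb'⟩, -⟩⟩
          exact ⟨⟨ha, 𝓖.anti (by omega) hb'⟩, hd⟩
        refine Finsupp.supported_mono this ?_
        rw [Finsupp.supported_inter]
        exact ⟨i1, i2⟩
      have h2' := h2 (t + 1) (n - t) (by omega) (by omega) (by omega)
      obtain ⟨w, hw, hwy⟩ := C.ex_prod C' (𝓕.sub (t + 1)) (𝓖.sub (n - t)) (hp _) (hq _)
        (m := m) (by omega) _ hdy ((C.tensor C').d_d_apply _)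
      have hP'P : P' ⊆ P := fun x hx => ⟨hx.1, 𝓖.anti (by omega) hx.2⟩
      have hP'Q : P' ⊆ Q t := fun x hx =>
        ⟨t, n - t, le_rfl, by omega, 𝓕.anti (by omega) hx.1, hx.2⟩
      obtain ⟨v1, hv1, hv1'⟩ := ih (by omega) (m + 1) hm (x + w)
        (Submodule.add_mem _ hx ((C.tensor C').gr_mono hP'Q _ hw))
        (by rw [map_add, hwy, hdxy, add_neg_cancel])
      obtain ⟨v2, hv2, hv2'⟩ := C.ex_prod C' (𝓕.sub (t + 1)) (𝓖.sub (n - (t + 1))) (hp _) (hq _)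
        (m := m + 1) (lt_of_le_of_lt (h1 _ _ (by omega)) hm) (y - w)
        (Submodule.sub_mem _ hy ((C.tensor C').gr_mono hP'P _ hw))
        (by rw [map_sub, hwy, sub_self])
      refine ⟨v1 + v2, Submodule.add_mem _ ((C.tensor C').gr_mono hQQ _ hv1)
        ((C.tensor C').gr_mono hPQ _ hv2), ?_⟩
      rw [map_add, hv1', hv2']
      abel
  have : 𝓕.prod 𝓖 n = Q n := by
    ext x
    constructor
    · rintro ⟨s, t, hst, h⟩
      exact ⟨s, t, by omega, hst, h⟩
    · rintro ⟨s, t, -, hst, h⟩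
      exact ⟨s, t, hst, h⟩
  rw [this]
  exact key n le_rfl m hm

end Filt
end Filt

/-! ### Koszul complexes and depth -/

section Koszul

open scoped Pointwise

/-- The sign `(-1)^{#\{j ∈ F : j < i\}}`, where the indices are ordered through `o`. -/
def sgn (R : Type) [CommRing R] {ι : Type} (o : ι → ℕ) (i : ι) (F : Finset ι) : R :=
  (-1) ^ (F.filter (fun j => o j < o i)).card

section Sign
variable {R : Type} [CommRing R] {ι : Type} [DecidableEq ι] {o : ι → ℕ}

theorem sgn_mul_self (i : ι) (F : Finset ι) : sgn R o i F * sgn R o i F = 1 := by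
  unfold sgn
  rw [← mul_pow]; simp

theorem sgn_insert {i j : ι} {F : Finset ι} (hi : i ∉ F) :
    sgn R o j (insert i F) = (if o i < o j then -1 else 1) * sgn R o j F := by
  unfold sgn
  rw [Finset.filter_insert]
  split_ifs with h
  · rw [Finset.card_insert_of_notMem (by simp [hi]), pow_succ]; ring
  · simp

theorem sgn_insert_self {i : ι} {F : Finset ι} (hi : i ∉ F) :
    sgn R o i (insert i F) = sgn R o i F := by
  rw [sgn_insert hi]; simp

theorem sgn_swap (ho : Function.Injective o) {i j : ι} (hij : i ≠ j) {F : Finset ι} (hi : i ∉ F)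
    (hj : j ∉ F) : sgn R o i F * sgn R o j (insert i F) =
      -(sgn R o j F * sgn R o i (insert j F)) := by
  rw [sgn_insert hi, sgn_insert hj]
  rcases lt_or_gt_of_ne (fun h => hij (ho h)) with h | h
  · rw [if_pos h, if_neg (not_lt.2 h.le)]; ring
  · rw [if_neg (not_lt.2 h.le), if_pos h]; ring

theorem sgn_swap' (ho : Function.Injective o) {i j : ι} (hij : i ≠ j) {F : Finset ι} (hi : i ∉ F)
    (hj : j ∉ F) : sgn R o i (insert j F) * sgn R o j (insert i F) =
      -(sgn R o j F * sgn R o i F) := by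
  rw [sgn_insert hi, sgn_insert hj]
  rcases lt_or_gt_of_ne (fun h => hij (ho h)) with h | h
  · rw [if_pos h, if_neg (not_lt.2 h.le)]; ring
  · rw [if_neg (not_lt.2 h.le), if_pos h]; ring

end Sign

variable {S : Type} [CommRing S] {ι : Type} [Fintype ι] [DecidableEq ι] (o : ι → ℕ) (x : ι → S)

/-- The differential of the Koszul complex of the sequence `x` with coefficients in `M`, in terms
of coordinates: an element of the complex is a function on the subsets of the index set. -/
def kz (M : Type) [AddCommGroup M] [Module S M] : (Finset ι → M) →ₗ[S] (Finset ι → M) where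
  toFun u F := ∑ i ∈ Fᶜ, (sgn S o i F * x i) • u (insert i F)
  map_add' u v := by
    ext F; simp [Finset.sum_add_distrib]
  map_smul' a u := by
    ext F
    simp only [Pi.smul_apply, RingHom.id_apply, Finset.smul_sum]
    exact Finset.sum_congr rfl fun i _ => smul_comm _ _ _

/-- The exterior multiplication by the `j`-th basis vector on the Koszul complex. -/
def cz (M : Type) [AddCommGroup M] [Module S M] (j : ι) : (Finset ι → M) →ₗ[S] (Finset ι → M) where
  toFun u F := if j ∈ F then sgn S o j F • u (F.erase j) else 0
  map_add' u v := by
    ext F; by_cases h : j ∈ F <;> simp [h]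
  map_smul' a u := by
    ext F; by_cases h : j ∈ F <;> simp [h, smul_comm a]

variable {M : Type} [AddCommGroup M] [Module S M]

theorem kz_apply (u : Finset ι → M) (F : Finset ι) :
    kz o x M u F = ∑ i ∈ Fᶜ, (sgn S o i F * x i) • u (insert i F) := rfl

theorem cz_apply (j : ι) (u : Finset ι → M) (F : Finset ι) :
    cz (S := S) o M j u F = if j ∈ F then sgn S o j F • u (F.erase j) else 0 := rfl

variable {o}

theorem kz_kz (ho : Function.Injective o) (u : Finset ι → M) : kz o x M (kz o x M u) = 0 := by
  ext F
  simp only [kz_apply, Pi.zero_apply, Finset.smul_sum]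
  rw [Finset.sum_sigma']
  refine Finset.sum_involution (fun p _ => ⟨p.2, p.1⟩) ?_ ?_ ?_ ?_
  · rintro ⟨i, j⟩ h
    simp only [Finset.mem_sigma, Finset.mem_compl, Finset.mem_insert, not_or] at h
    simp only [smul_smul]
    rw [Finset.insert_comm j i, ← add_smul]
    have := sgn_swap (R := S) ho (Ne.symm h.2.1) h.1 h.2.2
    rw [show sgn S o i F * x i * (sgn S o j (insert i F) * x j) +
      sgn S o j F * x j * (sgn S o i (insert j F) * x i) =
      (sgn S o i F * sgn S o j (insert i F) + sgn S o j F * sgn S o i (insert j F)) * (x i * x j)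
      by ring, this]
    simp
  · rintro ⟨i, j⟩ h _ h'
    simp only [Finset.mem_sigma, Finset.mem_compl, Finset.mem_insert, not_or] at h
    simp only [Sigma.mk.injEq, heq_eq_eq] at h'
    exact h.2.1 h'.1
  · rintro ⟨i, j⟩ h
    simp only [Finset.mem_sigma, Finset.mem_compl, Finset.mem_insert, not_or] at h ⊢
    exact ⟨h.2.2, Ne.symm h.2.1, h.1⟩
  · rintro ⟨i, j⟩ h
    rfl

/-- The Koszul differential and exterior multiplication satisfy the anticommutation relation
`c_j ∂ + ∂ c_j = x_j`. -/
theorem cz_kz_add (ho : Function.Injective o) (j : ι) (u : Finset ι → M) :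
    cz (S := S) o M j (kz o x M u) + kz o x M (cz (S := S) o M j u) = x j • u := by
  ext F
  simp only [Pi.add_apply, Pi.smul_apply]
  by_cases hj : j ∈ F
  · obtain ⟨G, hG, rfl⟩ : ∃ G, j ∉ G ∧ F = insert j G :=
      ⟨F.erase j, Finset.notMem_erase j F, (Finset.insert_erase hj).symm⟩
    rw [cz_apply, if_pos hj, Finset.erase_insert hG, kz_apply, kz_apply]
    have h1 : Gᶜ = insert j (insert j G)ᶜ := by
      ext i; simp only [Finset.mem_compl, Finset.mem_insert, not_or]
      by_cases h : i = j
      · subst h; simpa using hG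
      · simp [h]
    rw [h1, Finset.sum_insert (by simp), smul_add, smul_smul, ← mul_assoc, sgn_insert_self hG,
      sgn_mul_self, one_mul, add_assoc, Finset.smul_sum, ← Finset.sum_add_distrib]
    rw [Finset.sum_eq_zero, add_zero]
    intro i hi
    simp only [Finset.mem_compl, Finset.mem_insert, not_or] at hi
    rw [cz_apply, if_pos (by simp), Finset.insert_comm, Finset.erase_insert (by
      simp only [Finset.mem_insert, not_or]; exact ⟨Ne.symm hi.1, hG⟩), smul_smul, smul_smul,
      ← add_smul]
    have h2 : sgn S o j (insert j (insert i G)) = sgn S o j (insert i G) :=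
      sgn_insert_self (by simp only [Finset.mem_insert, not_or]; exact ⟨Ne.symm hi.1, hG⟩)
    have := sgn_swap' (R := S) ho hi.1 hi.2 hG
    rw [h2, show sgn S o j G * (sgn S o i G * x i) + sgn S o i (insert j G) * x i *
      sgn S o j (insert i G) = (sgn S o j G * sgn S o i G + sgn S o i (insert j G) *
      sgn S o j (insert i G)) * x i by ring, this]
    simp
  · rw [cz_apply, if_neg hj, zero_add, kz_apply, Finset.sum_eq_single j]
    · rw [cz_apply, if_pos (by simp), smul_smul, Finset.erase_insert hj, sgn_insert_self hj,
        mul_right_comm, sgn_mul_self, one_mul]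
    · intro i hi hij
      rw [cz_apply, if_neg (by simp [hj, Ne.symm hij]), smul_zero]
    · intro h; simp [hj] at h

/-- Every element of the ideal generated by `x` acts null-homotopically on the Koszul complex. -/
theorem exists_homotopy_smul (ho : Function.Injective o) {r : S}
    (hr : r ∈ Ideal.span (Set.range x)) : ∃ c : (Finset ι → M) →ₗ[S] (Finset ι → M),
      (∀ u, c (kz o x M u) + kz o x M (c u) = r • u) ∧
      ∀ m u, (∀ F : Finset ι, F.card ≠ m → u F = 0) → ∀ F : Finset ι, F.card ≠ m + 1 → c u F = 0 := by
  refine Submodule.span_induction (p := fun r _ => ∃ c : (Finset ι → M) →ₗ[S] (Finset ι → M),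
      (∀ u, c (kz o x M u) + kz o x M (c u) = r • u) ∧
      ∀ m u, (∀ F : Finset ι, F.card ≠ m → u F = 0) → ∀ F : Finset ι, F.card ≠ m + 1 → c u F = 0)
      ?_ ?_ ?_ ?_ hr
  · rintro _ ⟨j, rfl⟩
    refine ⟨cz (S := S) o M j, cz_kz_add x ho j, fun m u hu F hF => ?_⟩
    rw [cz_apply]
    split_ifs with h
    · rw [hu, smul_zero]
      rw [Finset.card_erase_of_mem h]
      have := Finset.card_pos.2 ⟨j, h⟩
      omega
    · rfl
  · exact ⟨0, fun u => by simp, fun m u _ F _ => rfl⟩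
  · rintro r s _ _ ⟨c, hc, hc'⟩ ⟨e, he, he'⟩
    refine ⟨c + e, fun u => ?_, fun m u hu F hF => ?_⟩
    · rw [add_smul, ← hc, ← he]
      simp only [LinearMap.add_apply, map_add]
      abel
    · simp [hc' m u hu F hF, he' m u hu F hF]
  · rintro s r _ ⟨c, hc, hc'⟩
    refine ⟨s • c, fun u => ?_, fun m u hu F hF => ?_⟩
    · rw [smul_eq_mul, mul_smul, ← hc]
      simp
    · simp [hc' m u hu F hF]

variable (o) in
/-- Exactness of the Koszul complex with coefficients in `M` at degree `m`. -/
def KEx (M : Type) [AddCommGroup M] [Module S M] (m : ℕ) : Prop :=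
  ∀ u : Finset ι → M, (∀ F, F.card ≠ m → u F = 0) → kz o x M u = 0 →
    ∃ v : Finset ι → M, (∀ F, F.card ≠ m + 1 → v F = 0) ∧ kz o x M v = u

theorem kz_comp {M' : Type} [AddCommGroup M'] [Module S M'] (g : M →ₗ[S] M') (u : Finset ι → M) :
    kz o x M' (fun F => g (u F)) = fun F => g (kz o x M u F) := by
  ext F
  simp [kz_apply]

theorem kz_deg {m : ℕ} {u : Finset ι → M} (hu : ∀ F : Finset ι, F.card ≠ m → u F = 0)
    {F : Finset ι} (hF : F.card + 1 ≠ m) : kz o x M u F = 0 := by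
  rw [kz_apply]
  refine Finset.sum_eq_zero fun i hi => ?_
  rw [hu, smul_zero]
  rwa [Finset.card_insert_of_notMem (by simpa using hi)]

theorem exists_lift {M' : Type} [AddCommGroup M'] [Module S M'] (g : M →ₗ[S] M')
    (u : Finset ι → M') (hu : ∀ F, ∃ m, g m = u F) :
    ∃ v : Finset ι → M, (∀ F, u F = 0 → v F = 0) ∧ (fun F => g (v F)) = u := by
  choose f hf using hu
  classical
  refine ⟨fun F => if u F = 0 then 0 else f F, fun F h => by simp [h], ?_⟩
  ext F
  by_cases h : u F = 0
  · simp [h]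
  · simp [h, hf]

/-- Passing to the quotient by a regular element in the ideal generated by `x` shifts the range of
vanishing of the Koszul homology by one. -/
theorem rees_step (ho : Function.Injective o) {r : S} (hr : r ∈ Ideal.span (Set.range x))
    (hreg : IsSMulRegular M r) (N d : ℕ) :
    (∀ i, N < i + (d + 1) → KEx o x M i) ↔ (∀ i, N < i + d → KEx o x (QuotSMulTop r M) i) := by
  have key : ∀ w : Finset ι → M, (∀ F, (Submodule.mkQ (r • (⊤ : Submodule S M))) (w F) = 0) →
      ∃ t : Finset ι → M, (∀ F, w F = 0 → t F = 0) ∧ (fun F => r • t F) = w := by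
    intro w hw
    refine exists_lift (LinearMap.lsmul S M r) w fun F => ?_
    have := hw F
    rw [Submodule.mkQ_apply, Submodule.Quotient.mk_eq_zero,
      Submodule.mem_smul_pointwise_iff_exists] at this
    obtain ⟨b, -, hb⟩ := this
    exact ⟨b, hb⟩
  have hinj : ∀ a b : Finset ι → M, r • a = r • b → a = b := fun a b hab =>
    funext fun F => hreg (congrFun hab F)
  constructor
  · intro H i hi u hu hu0
    obtain ⟨w, hw, rfl⟩ := exists_lift (Submodule.mkQ (r • (⊤ : Submodule S M))) u
      fun F => Submodule.mkQ_surjective _ (u F)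
    rw [show kz o x (QuotSMulTop r M) _ = _ from kz_comp x _ w] at hu0
    obtain ⟨y, hy, hyw⟩ := key (kz o x M w) (fun F => congrFun hu0 F)
    have hwd : ∀ F : Finset ι, F.card ≠ i → w F = 0 := fun F hF => hw F (hu F hF)
    have hy0 : kz o x M y = 0 := by
      apply hinj
      rw [smul_zero, ← map_smul, show r • y = kz o x M w from hyw, kz_kz x ho]
    obtain ⟨v, hv, hv'⟩ : ∃ v : Finset ι → M, (∀ F, F.card ≠ i → v F = 0) ∧ kz o x M v = y := by
      cases i with
      | zero =>
        refine ⟨0, fun _ _ => rfl, ?_⟩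
        ext F
        rw [map_zero, hy F (kz_deg x hwd (by omega))]
        rfl
      | succ i =>
        exact H i (by omega) y (fun F hF => hy F (kz_deg x hwd (by omega))) hy0
    obtain ⟨z, hz, hz'⟩ := H i (by omega) (w - r • v)
      (fun F hF => by simp [hwd F hF, hv F hF]) (by
        rw [map_sub, map_smul, hv', sub_eq_zero]; exact hyw.symm)
    refine ⟨fun F => (Submodule.mkQ (r • (⊤ : Submodule S M))) (z F),
      fun F hF => by beta_reduce; rw [hz F hF, map_zero], ?_⟩
    rw [show kz o x (QuotSMulTop r M) _ = _ from kz_comp x _ z, hz']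
    ext F
    rw [Pi.sub_apply, map_sub, sub_eq_self, Submodule.mkQ_apply, Submodule.Quotient.mk_eq_zero]
    exact Submodule.smul_mem_pointwise_smul _ _ _ trivial
  · intro H i hi u hu hu0
    obtain ⟨c, hc, hcd⟩ := exists_homotopy_smul (M := M) x ho hr
    have h1 : kz o x M (c u) = r • u := by
      have := hc u
      rwa [hu0, map_zero, zero_add] at this
    obtain ⟨y', hy', hy0⟩ := H (i + 1) (by omega)
      (fun F => (Submodule.mkQ (r • (⊤ : Submodule S M))) (c u F))
      (fun F hF => by beta_reduce; rw [hcd i u hu F hF, map_zero]) (by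
        rw [show kz o x (QuotSMulTop r M) _ = _ from kz_comp x _ (c u), h1]
        ext F
        rw [Submodule.mkQ_apply]
        refine (Submodule.Quotient.mk_eq_zero _).2 ?_
        exact Submodule.smul_mem_pointwise_smul _ _ _ trivial)
    obtain ⟨y, hy, rfl⟩ := exists_lift (Submodule.mkQ (r • (⊤ : Submodule S M))) y'
      fun F => Submodule.mkQ_surjective _ (y' F)
    rw [show kz o x (QuotSMulTop r M) _ = _ from kz_comp x _ y] at hy0
    obtain ⟨t, ht, htw⟩ := key (c u - kz o x M y) (fun F => by
      rw [Pi.sub_apply, map_sub, sub_eq_zero]; exact (congrFun hy0 F).symm)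
    refine ⟨t, fun F hF => ht F ?_, ?_⟩
    · rw [Pi.sub_apply, hcd i u hu F hF, kz_deg x (fun G hG => hy G (hy' G hG)) (by omega), sub_zero]
    · apply hinj
      rw [← map_smul, show r • t = c u - kz o x M y from htw, map_sub, kz_kz x ho, h1, sub_zero]

/-- If the Koszul complex is exact in top degree then `M` has no socle. -/
theorem eq_zero_of_kex_card (h : KEx o x M (Fintype.card ι)) {m : M} (hm : ∀ j, x j • m = 0) :
    m = 0 := by
  obtain ⟨v, hv, hv'⟩ := h (Pi.single Finset.univ m) (fun F hF => by
      rw [Pi.single_eq_of_ne]; rintro rfl; exact hF rfl) (by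
      ext F
      rw [kz_apply]
      refine Finset.sum_eq_zero fun i _ => ?_
      rw [mul_smul]
      by_cases h' : insert i F = Finset.univ
      · rw [h', Pi.single_eq_same, hm, smul_zero]
      · rw [Pi.single_eq_of_ne h', smul_zero, smul_zero])
  have : v = 0 := by
    ext F
    exact hv F (by have := Finset.card_le_univ F; omega)
  rw [this, map_zero] at hv'
  have := congrFun hv' Finset.univ
  rw [Pi.single_eq_same] at this
  exact this.symm

/-- If the Koszul homology vanishes in top degree, prime avoidance over the associated primes of `M`
provides a regular element in the maximal ideal generated by `x`. -/
theorem exists_regular [IsNoetherianRing S] [Module.Finite S M]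
    (hmax : (Ideal.span (Set.range x)).IsMaximal) (h : KEx o x M (Fintype.card ι)) :
    ∃ r ∈ Ideal.span (Set.range x), IsSMulRegular M r := by
  by_contra! hcon
  have hsub : ((Ideal.span (Set.range x) : Ideal S) : Set S) ⊆ ⋃ p ∈ associatedPrimes S M, p := by
    rw [biUnion_associatedPrimes_eq_compl_regular]
    exact fun r hr => hcon r hr
  have hfin := associatedPrimes.finite S M
  rw [show (⋃ p ∈ associatedPrimes S M, (p : Set S)) = ⋃ p ∈ (hfin.toFinset : Set (Ideal S)), (p : Set S) by simp] at hsub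
  rw [Ideal.subset_union_prime_finite (Finset.finite_toSet _) (f := fun p => p) ⊥ ⊥] at hsub
  · obtain ⟨p, hp, hle⟩ := hsub
    have hp' : p ∈ associatedPrimes S M := by simpa using hp
    have hpp : IsAssociatedPrime p M := hp'
    have heq : Ideal.span (Set.range x) = p := hmax.eq_of_le hpp.isPrime.ne_top hle
    obtain ⟨-, m, hm⟩ := isAssociatedPrime_iff.1 hpp
    have hm0 : m = 0 := eq_zero_of_kex_card x h fun j => by
      have : x j ∈ p := heq ▸ Ideal.subset_span ⟨j, rfl⟩
      rw [hm, Submodule.mem_colon_singleton] at this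
      simpa using this
    apply hpp.isPrime.ne_top
    rw [hm, hm0, Ideal.eq_top_iff_one, Submodule.mem_colon_singleton]
    simp
  · intro p hp _ _
    have hp' : p ∈ associatedPrimes S M := by simpa using hp
    have hpp : IsAssociatedPrime p M := hp'
    exact hpp.isPrime

/-- Depth-sensitivity of the Koszul complex: there is a weakly regular sequence of length `d` in the
maximal ideal generated by `x` if and only if the Koszul homology vanishes in degrees above
`N - d`, where `N` is the number of generators. -/
theorem rees (ho : Function.Injective o) [IsNoetherianRing S]
    (hmax : (Ideal.span (Set.range x)).IsMaximal) (d : ℕ) :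
    ∀ (M : Type) [AddCommGroup M] [Module S M] [Module.Finite S M],
    (∃ rs : List S, rs.length = d ∧ (∀ r ∈ rs, r ∈ Ideal.span (Set.range x)) ∧
      RingTheory.Sequence.IsWeaklyRegular M rs) ↔
    ∀ i, Fintype.card ι < i + d → KEx o x M i := by
  induction d with
  | zero =>
    intro M _ _ _
    refine ⟨fun _ i hi u hu _ => ⟨0, fun _ _ => rfl, ?_⟩, fun _ => ⟨[], rfl, by simp, by simp⟩⟩
    rw [map_zero]
    ext F
    exact (hu F (by have := Finset.card_le_univ F; omega)).symm
  | succ d ih =>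
    intro M _ _ _
    constructor
    · rintro ⟨rs, hlen, hmem, hreg⟩
      obtain ⟨r, rs, rfl⟩ := List.exists_cons_of_length_eq_add_one hlen
      rw [RingTheory.Sequence.isWeaklyRegular_cons_iff] at hreg
      rw [rees_step x ho (hmem r (by simp)) hreg.1]
      exact (ih (QuotSMulTop r M)).1
        ⟨rs, by simpa using hlen, fun s hs => hmem s (by simp [hs]), hreg.2⟩
    · intro H
      obtain ⟨r, hr, hreg⟩ := exists_regular x hmax (H (Fintype.card ι) (by omega))
      rw [rees_step x ho hr hreg] at H
      obtain ⟨rs, hlen, hmem, hrs⟩ := (ih (QuotSMulTop r M)).2 H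
      refine ⟨r :: rs, by simp [hlen], ?_, ?_⟩
      · simpa using ⟨hr, hmem⟩
      · exact (RingTheory.Sequence.isWeaklyRegular_cons_iff M r rs).2 ⟨hreg, hrs⟩

/-- The Auslander–Buchsbaum style formula: the depth is the number of generators minus the top
degree of nonvanishing Koszul homology. -/
theorem depth_add_eq (ho : Function.Injective o) [IsNoetherianRing S]
    (hmax : (Ideal.span (Set.range x)).IsMaximal) [Module.Finite S M]
    (hM : (Ideal.span (Set.range x)) • (⊤ : Submodule S M) ≠ ⊤) {p : ℕ}
    (hp : ¬ KEx o x M p) (hp' : ∀ m, p < m → KEx o x M m) :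
    idealDepth (Ideal.span (Set.range x)) M + p = Fintype.card ι := by
  have hset : {n | ∃ rs : List S, rs.length = n ∧ (∀ r ∈ rs, r ∈ Ideal.span (Set.range x)) ∧
      RingTheory.Sequence.IsRegular M rs} = {n | n + p ≤ Fintype.card ι} := by
    ext n
    have h1 : (∀ i, Fintype.card ι < i + n → KEx o x M i) ↔ n + p ≤ Fintype.card ι := by
      constructor
      · intro h
        by_contra! hcon
        exact hp (h p (by omega))
      · intro h i hi
        exact hp' i (by omega)
    change _ ↔ n + p ≤ Fintype.card ι
    rw [← h1, ← rees x ho hmax n M]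
    constructor
    · rintro ⟨rs, h, h', h''⟩
      exact ⟨rs, h, h', h''.1⟩
    · rintro ⟨rs, h, h', h''⟩
      refine ⟨rs, h, h', h'', fun htop => hM ?_⟩
      rw [eq_top_iff]
      conv_lhs => rw [htop]
      exact Submodule.smul_mono_left (Ideal.span_le.2 h')
  have hpc : p ≤ Fintype.card ι := by
    by_contra! hcon
    refine hp ((rees x ho hmax 0 M).1 ⟨[], rfl, by simp, by simp⟩ p (by omega))
  unfold idealDepth
  rw [hset, show {n | n + p ≤ Fintype.card ι} = Set.Iic (Fintype.card ι - p) by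
    ext n; change n + p ≤ Fintype.card ι ↔ n ≤ Fintype.card ι - p; omega, csSup_Iic]
  omega

end Koszul

/-! ### The Koszul complex of the variables in the monomial basis -/

section Mono

variable {k : Type} [Field k] {σ : Type} [Fintype σ] [DecidableEq σ] {o : σ → ℕ}

/-- The coordinates of the Koszul complex of the variables in the monomial basis. -/
noncomputable def thet (k σ : Type) [Field k] [Fintype σ] [DecidableEq σ] :
    (Finset σ × (σ →₀ ℕ) →₀ k) ≃ₗ[k] (Finset σ → MvPolynomial σ k) :=
  (Finsupp.curryLinearEquiv k).trans ((Finsupp.linearEquivFunOnFinite k _ _).trans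
    (LinearEquiv.piCongrRight fun _ => (basisMonomials σ k).repr.symm))

theorem coeff_thet (u : Finset σ × (σ →₀ ℕ) →₀ k) (F : Finset σ) (c : σ →₀ ℕ) :
    coeff c (thet k σ u F) = u (F, c) := by
  have h : ∀ p : MvPolynomial σ k, coeff c p = (basisMonomials σ k).repr p c := fun p => rfl
  rw [h]
  change (basisMonomials σ k).repr ((basisMonomials σ k).repr.symm (u.curry F)) c = _
  rw [LinearEquiv.apply_symm_apply, Finsupp.curry_apply]

theorem thet_symm_apply (v : Finset σ → MvPolynomial σ k) (p : Finset σ × (σ →₀ ℕ)) :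
    (thet k σ).symm v p = coeff p.2 (v p.1) := by
  rw [show p = (p.1, p.2) from rfl, ← coeff_thet, LinearEquiv.apply_symm_apply]

/-- The Koszul differential in the monomial basis. -/
noncomputable def kd (k : Type) [Field k] (o : σ → ℕ) : Module.End k (Finset σ × (σ →₀ ℕ) →₀ k) :=
  (thet k σ).symm.toLinearMap ∘ₗ
    ((kz o (X : σ → MvPolynomial σ k) (MvPolynomial σ k)).restrictScalars k) ∘ₗ (thet k σ).toLinearMap

theorem thet_kd (u : Finset σ × (σ →₀ ℕ) →₀ k) :
    thet k σ (kd k o u) = kz o (X : σ → MvPolynomial σ k) (MvPolynomial σ k) (thet k σ u) := by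
  simp [kd]

theorem kd_apply (u : Finset σ × (σ →₀ ℕ) →₀ k) (F : Finset σ) (c : σ →₀ ℕ) :
    kd k o u (F, c) = ∑ i ∈ Fᶜ, sgn k o i F *
      (if i ∈ c.support then u (insert i F, c - Finsupp.single i 1) else 0) := by
  rw [← coeff_thet, thet_kd, kz_apply, coeff_sum]
  refine Finset.sum_congr rfl fun i _ => ?_
  have h : sgn (MvPolynomial σ k) o i F = C (sgn k o i F) := by simp [sgn]
  rw [smul_eq_mul, mul_assoc, h, coeff_C_mul, coeff_X_mul', coeff_thet]

theorem kd_single (F : Finset σ) (c : σ →₀ ℕ) :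
    kd k o (Finsupp.single (F, c) 1) =
      ∑ i ∈ F, Finsupp.single (F.erase i, c + Finsupp.single i 1) (sgn k o i F) := by
  ext ⟨G, e⟩
  rw [kd_apply, Finsupp.finsetSum_apply]
  have e1 := Finset.sum_ite_mem Finset.univ Gᶜ fun i => sgn k o i G *
    (if i ∈ e.support then (Finsupp.single (F, c) (1 : k)) (insert i G, e - Finsupp.single i 1) else 0)
  have e2 := Finset.sum_ite_mem Finset.univ F fun i =>
    Finsupp.single (F.erase i, c + Finsupp.single i 1) (sgn k o i F) (G, e)
  rw [Finset.univ_inter] at e1 e2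
  rw [← e1, ← e2]
  refine Finset.sum_congr rfl fun i _ => ?_
  simp only [Finsupp.single_apply, Prod.mk.injEq]
  by_cases h1 : i ∈ F ∧ F.erase i = G ∧ c + Finsupp.single i 1 = e
  · obtain ⟨h1, rfl, rfl⟩ := h1
    have : sgn k o i (F.erase i) = sgn k o i F := by
      conv_rhs => rw [← Finset.insert_erase h1]
      rw [sgn_insert_self (by simp)]
    simp [h1, this, Finset.insert_erase]
  · have h2 : ¬ (i ∈ Gᶜ ∧ i ∈ e.support ∧ F = insert i G ∧ c = e - Finsupp.single i 1) := by
      rintro ⟨a1, a2, rfl, rfl⟩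
      rw [Finset.mem_compl] at a1
      refine h1 ⟨by simp, Finset.erase_insert a1, tsub_add_cancel_of_le ?_⟩
      rw [Finsupp.single_le_iff]
      exact Nat.one_le_iff_ne_zero.2 (Finsupp.mem_support_iff.1 a2)
    have h3 : (if i ∈ F then (if F.erase i = G ∧ c + Finsupp.single i 1 = e then sgn k o i F else 0)
        else 0) = 0 := by
      split_ifs with b1 b2
      · exact absurd ⟨b1, b2⟩ h1
      · rfl
      · rfl
    rw [h3]
    split_ifs with b1 b2 b3
    · exact absurd ⟨b1, b2, b3⟩ h2
    all_goals simp

theorem kd_ne_zero {u : Finset σ × (σ →₀ ℕ) →₀ k} {F : Finset σ} {c : σ →₀ ℕ}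
    (h : kd k o u (F, c) ≠ 0) :
    ∃ i ∉ F, i ∈ c.support ∧ u (insert i F, c - Finsupp.single i 1) ≠ 0 := by
  rw [kd_apply] at h
  obtain ⟨i, hi, hne⟩ := Finset.exists_ne_zero_of_sum_ne_zero h
  refine ⟨i, by simpa using hi, ?_⟩
  by_contra hcon
  apply hne
  split_ifs with h1
  · rw [not_and, not_not] at hcon
    rw [hcon h1, mul_zero]
  · rw [mul_zero]

/-- The Koszul complex of the variables as a based complex: the basis vector `(F, c)` stands for
the monomial `c` times the exterior basis vector of `F`. -/
noncomputable def kosz (k : Type) [Field k] {o : σ → ℕ} (ho : Function.Injective o) :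
    BCx k (Finset σ × (σ →₀ ℕ)) where
  deg p := p.1.card
  d := kd k o
  d_deg := by
    rintro ⟨F, c⟩
    rw [kd_single]
    refine Submodule.sum_mem _ fun i hi => Finsupp.single_mem_supported k _ ?_
    exact Finset.card_erase_add_one hi
  d_d := by
    refine LinearMap.ext fun u => ?_
    apply (thet k σ).injective
    rw [Module.End.mul_apply, thet_kd, thet_kd, kz_kz _ ho]
    simp

/-- The basis vectors whose monomial lies in `E`. -/
def lft (σ : Type) (E : Set (σ →₀ ℕ)) : Set (Finset σ × (σ →₀ ℕ)) := {p | p.2 ∈ E}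

/-- An up-set of exponents: the exponents of the monomials in a monomial ideal. -/
def IsUp {σ : Type} (E : Set (σ →₀ ℕ)) : Prop := ∀ c ∈ E, ∀ b, c + b ∈ E

theorem kosz_sub (ho : Function.Injective o) {E : Set (σ →₀ ℕ)} (hE : IsUp E) :
    (kosz k ho).Sub (lft σ E) := by
  rintro ⟨F, c⟩ hc
  change kd k o _ ∈ _
  rw [kd_single]
  exact Submodule.sum_mem _ fun i hi => Finsupp.single_mem_supported k _ (hE c hc _)

variable (k o) in
/-- The homotopy that divides by the variable `x`. -/
noncomputable def hx (x : σ) : Module.End k (Finset σ × (σ →₀ ℕ) →₀ k) :=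
  Finsupp.linearCombination k fun p => if x ∈ p.1 then 0 else
    Finsupp.single (insert x p.1, p.2 - Finsupp.single x 1) (sgn k o x p.1)

theorem hx_single (x : σ) (F : Finset σ) (c : σ →₀ ℕ) (r : k) :
    hx k o x (Finsupp.single (F, c) r) = r • if x ∈ F then 0 else
      Finsupp.single (insert x F, c - Finsupp.single x 1) (sgn k o x F) := by
  simp [hx]

/-- Dividing by `x` contracts the Koszul complex on the basis vectors that involve `x`, either in the
monomial or in the exterior part. -/
theorem hx_homotopy (ho : Function.Injective o) {x : σ} {F : Finset σ} {c : σ →₀ ℕ}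
    (hx' : x ∈ F ∪ c.support) :
    kd k o (hx k o x (Finsupp.single (F, c) 1)) + hx k o x (kd k o (Finsupp.single (F, c) 1)) =
      Finsupp.single (F, c) 1 := by
  rw [hx_single, one_smul, kd_single, map_sum]
  simp only [hx_single]
  by_cases hF : x ∈ F
  · rw [if_pos hF, map_zero, zero_add, Finset.sum_eq_single x]
    · rw [if_neg (by simp), Finset.insert_erase hF, add_tsub_cancel_right, Finsupp.smul_single,
        smul_eq_mul]
      have : sgn k o x (F.erase x) = sgn k o x F := by
        conv_rhs => rw [← Finset.insert_erase hF]
        rw [sgn_insert_self (by simp)]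
      rw [this, sgn_mul_self]
    · intro i hi hix
      rw [if_pos (Finset.mem_erase.2 ⟨Ne.symm hix, hF⟩), smul_zero]
    · intro h; exact absurd hF h
  · rw [if_neg hF]
    have hc : Finsupp.single x 1 ≤ c := by
      have : x ∈ c.support := by simpa [hF] using hx'
      rw [Finsupp.single_le_iff]
      exact Nat.one_le_iff_ne_zero.2 (Finsupp.mem_support_iff.1 this)
    rw [show Finsupp.single (insert x F, c - Finsupp.single x 1) (sgn k o x F) =
      sgn k o x F • Finsupp.single (insert x F, c - Finsupp.single x 1) 1 by simp, map_smul,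
      kd_single, Finset.sum_insert hF, smul_add, Finset.erase_insert hF, tsub_add_cancel_of_le hc,
      Finsupp.smul_single, smul_eq_mul, sgn_insert_self hF, sgn_mul_self, add_assoc,
      Finset.smul_sum, ← Finset.sum_add_distrib, Finset.sum_eq_zero, add_zero]
    intro i hi
    have hix : i ≠ x := by rintro rfl; exact hF hi
    rw [if_neg (by simp [hF])]
    obtain ⟨G, hG, rfl⟩ : ∃ G, i ∉ G ∧ F = insert i G :=
      ⟨F.erase i, Finset.notMem_erase i F, (Finset.insert_erase hi).symm⟩
    have hxG : x ∉ G := fun h => hF (Finset.mem_insert_of_mem h)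
    rw [Finset.erase_insert hG, Finset.insert_comm, Finset.erase_insert (by simp [hix, hG]),
      show c - Finsupp.single x 1 + Finsupp.single i 1 = c + Finsupp.single i 1 - Finsupp.single x 1
      from (tsub_add_eq_add_tsub hc), Finsupp.smul_single, Finsupp.smul_single, ← Finsupp.single_add,
      smul_eq_mul, smul_eq_mul, sgn_insert_self hG, sgn_insert_self (F := insert x G) (i := i)
        (by simp [hix, hG]), mul_comm, sgn_swap' ho hix hG hxG]
    rw [show -(sgn k o x G * sgn k o i G) + sgn k o i G * sgn k o x G = 0 by ring]
    simp

variable (k o) in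
/-- The homotopy that divides by a variable chosen in terms of the set of variables occurring in the
basis vector. This set does not change under the differential. -/
noncomputable def hh : Module.End k (Finset σ × (σ →₀ ℕ) →₀ k) :=
  open Classical in
  Finsupp.linearCombination k fun p => if h : (p.1 ∪ p.2.support).Nonempty then
    hx k o h.choose (Finsupp.single p 1) else 0

theorem hh_single {s : Finset σ} (hs : s.Nonempty) {F : Finset σ} {c : σ →₀ ℕ}
    (h : F ∪ c.support = s) (r : k) :
    hh k o (Finsupp.single (F, c) r) = hx k o hs.choose (Finsupp.single (F, c) r) := by
  subst h
  rw [show Finsupp.single (F, c) r = r • Finsupp.single (F, c) (1 : k) by simp, map_smul, map_smul]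
  unfold hh
  rw [Finsupp.linearCombination_single, dif_pos hs, one_smul]

theorem hh_homotopy (ho : Function.Injective o) {F : Finset σ} {c : σ →₀ ℕ}
    (h : (F ∪ c.support).Nonempty) :
    kd k o (hh k o (Finsupp.single (F, c) 1)) + hh k o (kd k o (Finsupp.single (F, c) 1)) =
      Finsupp.single (F, c) 1 := by
  have h1 : hh k o (kd k o (Finsupp.single (F, c) 1)) =
      hx k o h.choose (kd k o (Finsupp.single (F, c) 1)) := by
    rw [kd_single, map_sum, map_sum]
    refine Finset.sum_congr rfl fun i hi => hh_single h ?_ _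
    ext j
    simp only [Finset.mem_union, Finset.mem_erase, Finsupp.mem_support_iff, Finsupp.add_apply,
      Finsupp.single_apply]
    by_cases hij : i = j
    · subst hij; simp [hi]
    · simp [hij, Ne.symm hij]
  rw [h1, hh_single h rfl]
  exact hx_homotopy ho h.choose_spec

theorem hh_single_mem (F : Finset σ) (c : σ →₀ ℕ) :
    hh k o (Finsupp.single (F, c) 1) ∈ Finsupp.supported k k
      {q | q.1.card = F.card + 1 ∧ ∃ x, q.2 = c - Finsupp.single x 1 ∧ (x ∈ c.support)} := by
  by_cases h : (F ∪ c.support).Nonempty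
  · rw [hh_single h rfl, hx_single, one_smul]
    split_ifs with h'
    · exact Submodule.zero_mem _
    · refine Finsupp.single_mem_supported k _ ⟨Finset.card_insert_of_notMem h', h.choose, rfl, ?_⟩
      exact (Finset.mem_union.1 h.choose_spec).resolve_left h'
  · unfold hh
    rw [Finsupp.linearCombination_single, dif_neg h, smul_zero]
    exact Submodule.zero_mem _

/-- A filtration of the set of exponents by up-sets in which division by a variable lowers the
filtration by at most one. -/
structure EFil (σ : Type) where
  U : ℕ → Set (σ →₀ ℕ)
  anti : Antitone U
  zero : U 0 = Set.univ
  up : ∀ i, IsUp (U i)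
  one : 0 ∉ U 1
  div : ∀ i, ∀ c ∈ U (i + 1), ∀ x ∈ c.support, c - Finsupp.single x 1 ∈ U i

/-- The filtration of the Koszul complex induced by a filtration of the exponents. -/
noncomputable def EFil.filt (k : Type) [Field k] (E : EFil σ) (ho : Function.Injective o) :
    Filt (kosz k ho) where
  U i := lft σ (E.U i)
  anti i j hij p hp := E.anti hij hp
  zero := by ext p; simp [lft, E.zero]
  sub i := kosz_sub ho (E.up i)
  h := hh k o
  h_deg := fun ⟨F, c⟩ => Finsupp.supported_mono (fun q hq => hq.1) (hh_single_mem F c)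
  h_mem i := by
    rintro ⟨F, c⟩ hc
    refine Finsupp.supported_mono ?_ (hh_single_mem F c)
    rintro ⟨G, e⟩ ⟨-, x, h1, h2⟩
    change e ∈ E.U i
    rw [show e = _ from h1]
    exact E.div i c hc x h2
  homotopy := by
    rintro ⟨F, c⟩ hc
    refine hh_homotopy ho ?_
    obtain ⟨i, hi⟩ := Finsupp.support_nonempty_iff.2 (show c ≠ 0 from fun h => E.one (h ▸ hc))
    exact ⟨i, Finset.mem_union_right _ hi⟩

end Mono

/-! ### Depth of monomial quotients in terms of the Koszul complex of the ideal -/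

section Depth

variable {k : Type} [Field k] {σ : Type} [Fintype σ] [DecidableEq σ] {o : σ → ℕ}

theorem isMaximal_span_X : (Ideal.span (Set.range (X : σ → MvPolynomial σ k))).IsMaximal := by
  have h : Ideal.span (Set.range (X : σ → MvPolynomial σ k)) =
      RingHom.ker (constantCoeff : MvPolynomial σ k →+* k) := by
    ext f
    have := mem_pow_idealOfVars_iff' (σ := σ) (R := k) 1 f
    rw [pow_one] at this
    change f ∈ idealOfVars σ k ↔ _
    rw [this, RingHom.mem_ker, constantCoeff_eq]
    constructor
    · intro h; exact h 0 (by simp)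
    · intro h c hc
      have : c = 0 := by
        rw [← Finsupp.degree_eq_zero_iff]; omega
      rw [this, h]
  rw [h]
  exact RingHom.ker_isMaximal_of_surjective _ fun a => ⟨C a, by simp⟩

theorem mem_gr_lft (ho : Function.Injective o) {E : Set (σ →₀ ℕ)} {m : ℕ}
    {u : Finset σ × (σ →₀ ℕ) →₀ k} :
    u ∈ Finsupp.supported k k ((kosz k ho).gr (lft σ E) m) ↔
      ∀ F c, u (F, c) ≠ 0 → c ∈ E ∧ F.card = m := by
  rw [Finsupp.mem_supported]
  constructor
  · intro h F c hne
    exact h (Finsupp.mem_support_iff.2 hne)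
  · rintro h ⟨F, c⟩ hm
    exact h F c (Finsupp.mem_support_iff.1 hm)

/-- Translation between elements of the based complex and functions with values in a monomial
ideal. -/
theorem mem_gr_lft_iff (ho : Function.Injective o) {E : Set (σ →₀ ℕ)}
    {Q : Ideal (MvPolynomial σ k)} (hQ : ∀ f, f ∈ Q ↔ ∀ c, coeff c f ≠ 0 → c ∈ E) {m : ℕ}
    {u : Finset σ × (σ →₀ ℕ) →₀ k} :
    u ∈ Finsupp.supported k k ((kosz k ho).gr (lft σ E) m) ↔
      (∀ F, F.card ≠ m → thet k σ u F = 0) ∧ ∀ F, thet k σ u F ∈ Q := by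
  rw [mem_gr_lft]
  constructor
  · intro h
    refine ⟨fun F hF => ?_, fun F => (hQ _).2 fun c hc => ?_⟩
    · ext c
      rw [coeff_thet, coeff_zero]
      by_contra hne
      exact hF (h F c hne).2
    · rw [coeff_thet] at hc
      exact (h F c hc).1
  · rintro ⟨h1, h2⟩ F c hne
    rw [← coeff_thet] at hne
    refine ⟨(hQ _).1 (h2 F) c hne, ?_⟩
    by_contra hF
    rw [h1 F hF, coeff_zero] at hne
    exact hne rfl

theorem hh_homotopy_apply (ho : Function.Injective o) {u : Finset σ × (σ →₀ ℕ) →₀ k}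
    (hu : ∀ F c, u (F, c) ≠ 0 → (F ∪ c.support).Nonempty) :
    kd k o (hh k o u) + hh k o (kd k o u) = u := by
  refine eqOn_supported_of_single (L := kd k o * hh k o + hh k o * kd k o) (L' := LinearMap.id)
    (Z := {p | (p.1 ∪ p.2.support).Nonempty}) (fun a ha => hh_homotopy ho ha) ?_
  rw [Finsupp.mem_supported]
  rintro ⟨F, c⟩ hm
  exact hu F c (Finsupp.mem_support_iff.1 hm)

theorem hh_deg {m : ℕ} {u : Finset σ × (σ →₀ ℕ) →₀ k} (hu : ∀ F c, u (F, c) ≠ 0 → F.card = m) :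
    ∀ F c, hh k o u (F, c) ≠ 0 → F.card = m + 1 := by
  have : hh k o u ∈ Finsupp.supported k k {p : Finset σ × (σ →₀ ℕ) | p.1.card = m + 1} := by
    refine map_supported_of_single (Z := {p : Finset σ × (σ →₀ ℕ) | p.1.card = m}) ?_ ?_
    · rintro ⟨F, c⟩ hF
      refine Finsupp.supported_mono ?_ (hh_single_mem F c)
      rintro q ⟨hq, -⟩
      change q.1.card = m + 1
      rw [hq]
      exact congrArg (· + 1) hF
    · rw [Finsupp.mem_supported]
      rintro ⟨F, c⟩ hm
      exact hu F c (Finsupp.mem_support_iff.1 hm)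
  intro F c h
  exact (Finsupp.mem_supported _ _).1 this (Finsupp.mem_support_iff.2 h)

theorem thet_deg {m : ℕ} {u : Finset σ × (σ →₀ ℕ) →₀ k} :
    (∀ F, F.card ≠ m → thet k σ u F = 0) ↔ ∀ F c, u (F, c) ≠ 0 → F.card = m := by
  constructor
  · intro h F c hne
    by_contra hF
    rw [← coeff_thet, h F hF] at hne
    exact hne rfl
  · intro h F hF
    ext c
    rw [coeff_thet, coeff_zero]
    by_contra hne
    exact hF (h F c hne)

/-- The connecting isomorphism between the Koszul homology of `S / Q` and of `Q`. -/
theorem kex_iff_ex (ho : Function.Injective o) {E : Set (σ →₀ ℕ)} (h0 : 0 ∉ E)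
    {Q : Ideal (MvPolynomial σ k)} (hQ : ∀ f, f ∈ Q ↔ ∀ c, coeff c f ≠ 0 → c ∈ E) (i : ℕ) :
    KEx o (X : σ → MvPolynomial σ k) (MvPolynomial σ k ⧸ Q) (i + 1) ↔
      (kosz k ho).Ex (lft σ E) i := by
  have hmk : ∀ f : MvPolynomial σ k, Submodule.mkQ Q f = 0 ↔ f ∈ Q := fun f => by
    rw [Submodule.mkQ_apply, Submodule.Quotient.mk_eq_zero]
  have hsurj : ∀ g : MvPolynomial σ k ⧸ Q, ∃ f, Submodule.mkQ Q f = g := Submodule.mkQ_surjective _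
  constructor
  · intro H u hu hu0
    have hu0' : kd k o u = 0 := hu0
    have hhu : kd k o (hh k o u) = u := by
      have := hh_homotopy_apply (u := u) ho (fun F c hne => by
        obtain ⟨x, hx⟩ := Finsupp.support_nonempty_iff.2
          (show c ≠ 0 from fun h => h0 (h ▸ ((mem_gr_lft ho).1 hu F c hne).1))
        exact ⟨x, Finset.mem_union_right _ hx⟩)
      rwa [hu0', map_zero, add_zero] at this
    have hdeg := thet_deg.2 (hh_deg (o := o) fun F c hne => ((mem_gr_lft ho).1 hu F c hne).2)
    have huQ := (mem_gr_lft_iff ho hQ).1 hu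
    obtain ⟨y', hy', hyu⟩ := H (fun F => Submodule.mkQ Q (thet k σ (hh k o u) F))
      (fun F hF => by beta_reduce; rw [hdeg F hF, map_zero]) (by
        rw [kz_comp, ← thet_kd, hhu]
        ext F
        exact (hmk _).2 (huQ.2 F))
    obtain ⟨y, hy, rfl⟩ := exists_lift (Submodule.mkQ Q) y' fun F => hsurj (y' F)
    rw [kz_comp] at hyu
    refine ⟨hh k o u - kd k o ((thet k σ).symm y), ?_, ?_⟩
    · refine (mem_gr_lft_iff ho hQ).2 ⟨fun F hF => ?_, fun F => ?_⟩
      · rw [map_sub, Pi.sub_apply, hdeg F hF, thet_kd, LinearEquiv.apply_symm_apply,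
          kz_deg (m := i + 2) _ (fun G hG => hy G (hy' G hG)) (by omega), sub_zero]
      · rw [map_sub, Pi.sub_apply, thet_kd, LinearEquiv.apply_symm_apply, ← hmk, map_sub, sub_eq_zero]
        exact (congrFun hyu F).symm
    · change kd k o _ = u
      rw [map_sub, hhu, show kd k o (kd k o ((thet k σ).symm y)) = 0 from (kosz k ho).d_d_apply _,
        sub_zero]
  · intro H u hu hu0
    obtain ⟨w, hw, rfl⟩ := exists_lift (Submodule.mkQ Q) u fun F => hsurj (u F)
    have hwd : ∀ F : Finset σ, F.card ≠ i + 1 → w F = 0 := fun F hF => hw F (hu F hF)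
    rw [kz_comp] at hu0
    obtain ⟨v, hv, hvw⟩ := H (kd k o ((thet k σ).symm w))
      ((mem_gr_lft_iff ho hQ).2 ⟨fun F hF => by
        rw [thet_kd, LinearEquiv.apply_symm_apply]
        exact kz_deg _ hwd (by omega), fun F => by
        rw [thet_kd, LinearEquiv.apply_symm_apply]
        exact (hmk _).1 (congrFun hu0 F)⟩) ((kosz k ho).d_d_apply _)
    have hvw' : kd k o v = kd k o ((thet k σ).symm w) := hvw
    have hvd := (mem_gr_lft_iff ho hQ).1 hv
    have hzd : ∀ F c, ((thet k σ).symm w - v) (F, c) ≠ 0 → F.card = i + 1 := by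
      rw [← thet_deg]
      intro F hF
      rw [map_sub, LinearEquiv.apply_symm_apply, Pi.sub_apply, hwd F hF, hvd.1 F hF, sub_zero]
    have hz := hh_homotopy_apply (u := (thet k σ).symm w - v) ho fun F c hne => by
      have := hzd F c hne
      obtain ⟨x, hx⟩ := Finset.card_pos.1 (show 0 < F.card by omega)
      exact ⟨x, Finset.mem_union_left _ hx⟩
    rw [map_sub (kd k o), hvw', sub_self, map_zero, add_zero] at hz
    refine ⟨fun F => Submodule.mkQ Q (thet k σ (hh k o ((thet k σ).symm w - v)) F),
      fun F hF => ?_, ?_⟩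
    · beta_reduce
      rw [thet_deg.2 (hh_deg hzd) F hF, map_zero]
    · rw [kz_comp, ← thet_kd, hz]
      ext F
      beta_reduce
      rw [map_sub, LinearEquiv.apply_symm_apply, Pi.sub_apply, map_sub, (hmk _).2 (hvd.2 F), sub_zero]

/-- A minimal generator of a nonzero monomial ideal is a nonzero Koszul homology class in degree
zero. -/
theorem not_ex_zero (ho : Function.Injective o) {E : Set (σ →₀ ℕ)} (hne : E.Nonempty) :
    ¬ (kosz k ho).Ex (lft σ E) 0 := by
  obtain ⟨c, hc, hmin⟩ : ∃ c ∈ E, ∀ b ∈ E, Finsupp.degree c ≤ Finsupp.degree b := by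
    obtain ⟨c, hc, h⟩ := (measure (Finsupp.degree : (σ →₀ ℕ) → ℕ)).wf.has_min E hne
    exact ⟨c, hc, fun b hb => not_lt.1 (h b hb)⟩
  intro H
  obtain ⟨v, hv, hvu⟩ := H (Finsupp.single (∅, c) 1)
    (Finsupp.single_mem_supported k _ ⟨hc, rfl⟩) (by
      change kd k o _ = 0
      rw [kd_single]; simp)
  obtain ⟨i, -, hi, hne⟩ := kd_ne_zero (o := o) (u := v) (F := ∅) (c := c) (by
    rw [show kd k o v = _ from hvu]; simp)
  have h1 := hmin _ ((mem_gr_lft ho).1 hv _ _ hne).1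
  have h2 : c - Finsupp.single i 1 + Finsupp.single i 1 = c := by
    apply tsub_add_cancel_of_le
    rw [Finsupp.single_le_iff]
    exact Nat.one_le_iff_ne_zero.2 (Finsupp.mem_support_iff.1 hi)
  have h3 := congrArg Finsupp.degree h2
  rw [map_add, Finsupp.degree_single] at h3
  omega

/-- The depth of `S / Q` for a monomial ideal `Q` in terms of the top nonvanishing homology of the
Koszul complex of `Q`. -/
theorem depth_char (ho : Function.Injective o) {E : Set (σ →₀ ℕ)} (h0 : 0 ∉ E)
    (hne : E.Nonempty) {Q : Ideal (MvPolynomial σ k)}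
    (hQ : ∀ f, f ∈ Q ↔ ∀ c, coeff c f ≠ 0 → c ∈ E) :
    ∃ p, idealDepth (Ideal.span (Set.range (X : σ → MvPolynomial σ k))) (MvPolynomial σ k ⧸ Q) +
        (p + 1) = Fintype.card σ ∧
      ¬ (kosz k ho).Ex (lft σ E) p ∧ ∀ m, p < m → (kosz k ho).Ex (lft σ E) m := by
  have hbd : ∀ m, ¬ (kosz k ho).Ex (lft σ E) m → m ≤ Fintype.card σ := by
    intro m hm
    by_contra! hcon
    apply hm
    intro u hu _
    refine ⟨0, Submodule.zero_mem _, ?_⟩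
    rw [map_zero]
    symm
    ext ⟨F, c⟩
    by_contra hne
    have := ((mem_gr_lft ho).1 hu F c hne).2
    have := Finset.card_le_univ F
    omega
  have hmem : sSup {m | ¬ (kosz k ho).Ex (lft σ E) m} ∈ {m | ¬ (kosz k ho).Ex (lft σ E) m} :=
    Nat.sSup_mem ⟨0, not_ex_zero ho hne⟩ ⟨_, fun m hm => hbd m hm⟩
  set p := sSup {m | ¬ (kosz k ho).Ex (lft σ E) m} with hp
  have hp1 : ¬ (kosz k ho).Ex (lft σ E) p := hmem
  have hp2 : ∀ m, p < m → (kosz k ho).Ex (lft σ E) m := by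
    intro m hm
    by_contra hcon
    have : m ≤ p := le_csSup ⟨_, fun m hm => hbd m hm⟩ hcon
    omega
  refine ⟨p, ?_, hp1, hp2⟩
  have hle : Q ≤ Ideal.span (Set.range (X : σ → MvPolynomial σ k)) := by
    intro f hf
    have := mem_pow_idealOfVars_iff' (σ := σ) (R := k) 1 f
    rw [pow_one] at this
    change f ∈ idealOfVars σ k
    rw [this]
    intro c hc
    have : c = 0 := by rw [← Finsupp.degree_eq_zero_iff]; omega
    subst this
    by_contra hcon
    exact h0 ((hQ f).1 hf 0 hcon)
  refine depth_add_eq X ho isMaximal_span_X ?_ ?_ ?_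
  · intro htop
    have h1 : Submodule.mkQ Q (1 : MvPolynomial σ k) ∈ (⊤ : Submodule (MvPolynomial σ k) (MvPolynomial σ k ⧸ Q)) := trivial
    rw [← htop, ← LinearMap.range_eq_top.2 (Submodule.mkQ_surjective Q), LinearMap.range_eq_map,
      ← Submodule.map_smul''] at h1
    obtain ⟨g, hg, hg1⟩ := h1
    rw [← sub_eq_zero, ← map_sub, Submodule.mkQ_apply, Submodule.Quotient.mk_eq_zero] at hg1
    have hg2 : g ∈ Ideal.span (Set.range (X : σ → MvPolynomial σ k)) := by
      simpa using hg
    exact isMaximal_span_X.ne_top ((Ideal.eq_top_iff_one _).2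
      (by simpa using Ideal.sub_mem _ hg2 (hle hg1)))
  · rwa [kex_iff_ex ho h0 hQ]
  · intro m hm
    obtain ⟨j, rfl⟩ : ∃ j, m = j + 1 := ⟨m - 1, by omega⟩
    rw [kex_iff_ex ho h0 hQ]
    exact hp2 j (by omega)

end Depth

/-! ### The Koszul complex of a disjoint union of variables -/

section Union

variable {k : Type} [Field k]

theorem ex_congr {α β : Type} (C : BCx k α) (C' : BCx k β) (e : α ≃ β)
    (hdeg : ∀ a, C'.deg (e a) = C.deg a)
    (hd : ∀ a, C'.d (Finsupp.single (e a) 1) = Finsupp.domLCongr (R := k) e (C.d (Finsupp.single a 1)))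
    {U : Set α} {U' : Set β} (hU : ∀ a, e a ∈ U' ↔ a ∈ U) (m : ℕ) : C.Ex U m ↔ C'.Ex U' m := by
  have hL : ∀ (u : α →₀ k) a, Finsupp.domLCongr (R := k) e u (e a) = u a := fun u a => by
    simp [Finsupp.domLCongr_apply, Finsupp.domCongr_apply]
  have hsup : ∀ (u : α →₀ k) i, Finsupp.domLCongr (R := k) e u ∈ Finsupp.supported k k (C'.gr U' i) ↔
      u ∈ Finsupp.supported k k (C.gr U i) := by
    intro u i
    rw [Finsupp.mem_supported', Finsupp.mem_supported', ← e.forall_congr_right]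
    refine forall_congr' fun a => ?_
    rw [hL]
    have : e a ∈ C'.gr U' i ↔ a ∈ C.gr U i := by
      change e a ∈ U' ∧ C'.deg (e a) = i ↔ a ∈ U ∧ C.deg a = i
      rw [hU, hdeg]
    rw [this]
  have hdL : ∀ u, C'.d (Finsupp.domLCongr (R := k) e u) = Finsupp.domLCongr (R := k) e (C.d u) := by
    intro u
    have : C'.d ∘ₗ (Finsupp.domLCongr (R := k) e).toLinearMap =
        (Finsupp.domLCongr (R := k) e).toLinearMap ∘ₗ C.d := by
      refine ext_single fun a => ?_
      simp [hd]
    exact congrArg (fun f => f u) this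
  constructor
  · intro H u hu hu0
    obtain ⟨w, rfl⟩ := (Finsupp.domLCongr (R := k) e).surjective u
    obtain ⟨v, hv, rfl⟩ := H w ((hsup _ _).1 hu) (by
      rw [hdL] at hu0; exact (LinearEquiv.map_eq_zero_iff _).1 hu0)
    exact ⟨_, (hsup _ _).2 hv, hdL v⟩
  · intro H u hu hu0
    obtain ⟨v', hv, hvu⟩ := H (Finsupp.domLCongr (R := k) e u) ((hsup _ _).2 hu) (by
      rw [hdL, hu0, map_zero])
    obtain ⟨v, rfl⟩ := (Finsupp.domLCongr (R := k) e).surjective v'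
    rw [hdL] at hvu
    exact ⟨v, (hsup _ _).1 hv, (Finsupp.domLCongr (R := k) e).injective hvu⟩

variable {σ τ : Type} [Fintype σ] [Fintype τ] [DecidableEq σ] [DecidableEq τ]
  {o : σ → ℕ} {o' : τ → ℕ} {o'' : σ ⊕ τ → ℕ}

/-- The identification of the monomial basis for the union of two sets of variables with the product
of the two bases. -/
noncomputable def eqv (σ τ : Type) [DecidableEq σ] [DecidableEq τ] :
    (Finset σ × (σ →₀ ℕ)) × (Finset τ × (τ →₀ ℕ)) ≃ Finset (σ ⊕ τ) × (σ ⊕ τ →₀ ℕ) where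
  toFun p := (p.1.1.disjSum p.2.1, Finsupp.sumElim p.1.2 p.2.2)
  invFun q := ((q.1.toLeft, (Finsupp.sumFinsuppEquivProdFinsupp q.2).1),
    (q.1.toRight, (Finsupp.sumFinsuppEquivProdFinsupp q.2).2))
  left_inv := by
    rintro ⟨⟨F, c⟩, ⟨G, e⟩⟩
    have h : Finsupp.sumFinsuppEquivProdFinsupp (Finsupp.sumElim c e) = (c, e) :=
      Finsupp.sumFinsuppEquivProdFinsupp.apply_symm_apply (c, e)
    simp [h]
  right_inv := by
    rintro ⟨H, c⟩
    simp [Finset.toLeft_disjSum_toRight]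

theorem eqv_apply (F : Finset σ) (c : σ →₀ ℕ) (G : Finset τ) (e : τ →₀ ℕ) :
    eqv σ τ ((F, c), (G, e)) = (F.disjSum G, Finsupp.sumElim c e) := rfl

theorem sgn_inl (h1 : ∀ i j, o'' (.inl i) < o'' (.inl j) ↔ o i < o j)
    (h3 : ∀ i j, o'' (.inl i) < o'' (.inr j)) (i : σ) (F : Finset σ) (G : Finset τ) :
    sgn k o'' (.inl i) (F.disjSum G) = sgn k o i F := by
  unfold sgn
  congr 1
  have : (F.disjSum G).filter (fun j => o'' j < o'' (.inl i)) =
      (F.filter (fun j => o j < o i)).disjSum ∅ := by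
    ext (a | a)
    · simp [h1]
    · simp [(h3 i a).le]
  rw [this, Finset.card_disjSum, Finset.card_empty, add_zero]

theorem sgn_inr (h2 : ∀ i j, o'' (.inr i) < o'' (.inr j) ↔ o' i < o' j)
    (h3 : ∀ i j, o'' (.inl i) < o'' (.inr j)) (j : τ) (F : Finset σ) (G : Finset τ) :
    sgn k o'' (.inr j) (F.disjSum G) = (-1) ^ F.card * sgn k o' j G := by
  unfold sgn
  rw [← pow_add]
  congr 1
  have : (F.disjSum G).filter (fun i => o'' i < o'' (.inr j)) =
      F.disjSum (G.filter (fun i => o' i < o' j)) := by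
    ext (a | a)
    · simp [h3]
    · simp [h2]
  rw [this, Finset.card_disjSum]

/-- The Koszul complex of the union of two sets of variables is the tensor product of the two Koszul
complexes. The signs match because the first set of variables precedes the second. -/
theorem kosz_tensor_ex (ho : Function.Injective o) (ho' : Function.Injective o')
    (ho'' : Function.Injective o'')
    (h1 : ∀ i j, o'' (.inl i) < o'' (.inl j) ↔ o i < o j)
    (h2 : ∀ i j, o'' (.inr i) < o'' (.inr j) ↔ o' i < o' j)
    (h3 : ∀ i j, o'' (.inl i) < o'' (.inr j)) {V : Set ((Finset σ × (σ →₀ ℕ)) × (Finset τ × (τ →₀ ℕ)))}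
    {V' : Set (Finset (σ ⊕ τ) × (σ ⊕ τ →₀ ℕ))} (hV : ∀ p, eqv σ τ p ∈ V' ↔ p ∈ V) (m : ℕ) :
    ((kosz k ho).tensor (kosz k ho')).Ex V m ↔ (kosz k ho'').Ex V' m := by
  refine ex_congr _ _ (eqv σ τ) ?_ ?_ hV m
  · rintro ⟨⟨F, c⟩, ⟨G, e⟩⟩
    rw [eqv_apply]
    exact Finset.card_disjSum F G
  · rintro ⟨⟨F, c⟩, ⟨G, e⟩⟩
    rw [← tens_single (F, c) (G, e), BCx.tensor_d_tens, eqv_apply, BCx.sg_single]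
    change kd k o'' _ = Finsupp.domLCongr (R := k) (eqv σ τ) (tens (kd k o _) _ +
      tens ((-1) ^ F.card • _) (kd k o' _))
    rw [kd_single, kd_single, kd_single, Finset.sum_disjSum, map_add]
    congr 1
    · rw [map_sum, LinearMap.sum_apply, map_sum]
      refine Finset.sum_congr rfl fun i hi => ?_
      rw [sgn_inl h1 h3, show Finsupp.single (F.erase i, c + Finsupp.single i 1) (sgn k o i F) =
        sgn k o i F • Finsupp.single (F.erase i, c + Finsupp.single i 1) 1 by simp, map_smul,
        LinearMap.smul_apply, tens_single, map_smul, Finsupp.domLCongr_single, eqv_apply,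
        Finsupp.smul_single, smul_eq_mul, mul_one]
      congr 2
      · ext (a | a) <;> simp
      · ext (a | a) <;> simp [Finsupp.single_apply]
    · rw [map_sum, map_sum]
      refine Finset.sum_congr rfl fun j hj => ?_
      rw [sgn_inr h2 h3, show Finsupp.single (G.erase j, e + Finsupp.single j 1) (sgn k o' j G) =
        sgn k o' j G • Finsupp.single (G.erase j, e + Finsupp.single j 1) 1 by simp, map_smul,
        LinearMap.map_smul₂, tens_single, map_smul, map_smul, Finsupp.domLCongr_single,
        eqv_apply, Finsupp.smul_single, Finsupp.smul_single, smul_eq_mul, smul_eq_mul, mul_one,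
        mul_comm]
      congr 2
      · ext (a | a) <;> simp
      · ext (a | a) <;> simp [Finsupp.single_apply]

end Union

/-! ### Symbolic powers of monomial ideals -/

section Sym

variable {k : Type} [Field k] {σ : Type}

/-- `Q` is the monomial ideal whose monomials have exponents in `E`. -/
def Mon (Q : Ideal (MvPolynomial σ k)) (E : Set (σ →₀ ℕ)) : Prop :=
  ∀ f, f ∈ Q ↔ ∀ c, coeff c f ≠ 0 → c ∈ E

/-- The exponents of the monomials in the `n`-th power of a monomial ideal. -/
def pw (E : Set (σ →₀ ℕ)) : ℕ → Set (σ →₀ ℕ)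
  | 0 => Set.univ
  | n + 1 => {c | ∃ a ∈ pw E n, ∃ b ∈ E, a + b = c}

/-- The exponents that lie in `W` after multiplication by a monomial free of the variables in
`C`. -/
def sat (W : Set (σ →₀ ℕ)) (C : Set σ) : Set (σ →₀ ℕ) :=
  {c | ∃ m : σ →₀ ℕ, (∀ i ∈ C, m i = 0) ∧ c + m ∈ W}

/-- `C` is a set of variables meeting every monomial with exponent in `E`. -/
def IsCov (E : Set (σ →₀ ℕ)) (C : Set σ) : Prop := ∀ e ∈ E, ∃ i ∈ C, e i ≠ 0

/-- The exponents of the monomials in the `n`-th symbolic power of a monomial ideal. -/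
def symE (E : Set (σ →₀ ℕ)) (n : ℕ) : Set (σ →₀ ℕ) :=
  {c | ∀ C, Minimal (IsCov E) C → c ∈ sat (pw E n) C}

variable {E : Set (σ →₀ ℕ)} {Q : Ideal (MvPolynomial σ k)}

theorem pw_up (hE : IsUp E) (n : ℕ) : IsUp (pw E n) := by
  cases n with
  | zero => intro c _ b; trivial
  | succ n =>
    rintro _ ⟨a, ha, b, hb, rfl⟩ e
    exact ⟨a, ha, b + e, hE b hb e, (add_assoc _ _ _).symm⟩

theorem pw_anti (hE : IsUp E) : Antitone (pw E) := by
  refine antitone_nat_of_succ_le fun n => ?_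
  rintro _ ⟨a, ha, b, hb, rfl⟩
  exact pw_up hE n a ha b

theorem single_le_of_mem {c : σ →₀ ℕ} {x : σ} (hx : x ∈ c.support) : Finsupp.single x 1 ≤ c := by
  rw [Finsupp.single_le_iff]
  exact Nat.one_le_iff_ne_zero.2 (Finsupp.mem_support_iff.1 hx)

theorem pw_div (hE : IsUp E) (n : ℕ) : ∀ c ∈ pw E (n + 1), ∀ x ∈ c.support,
    c - Finsupp.single x 1 ∈ pw E n := by
  induction n with
  | zero => intros; trivial
  | succ n ih =>
    rintro _ ⟨a, ha, b, hb, rfl⟩ x hx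
    by_cases hxa : x ∈ a.support
    · exact ⟨a - Finsupp.single x 1, ih a ha x hxa, b, hb,
        tsub_add_eq_add_tsub (single_le_of_mem hxa)⟩
    · have hxb : x ∈ b.support := by
        simp only [Finsupp.mem_support_iff, Finsupp.add_apply, not_not] at hx hxa ⊢
        omega
      rw [add_tsub_assoc_of_le (single_le_of_mem hxb)]
      exact pw_up hE _ a ha _

theorem sat_anti (hE : IsUp E) (C : Set σ) {i j : ℕ} (h : i ≤ j) :
    sat (pw E j) C ⊆ sat (pw E i) C := fun _ ⟨m, hm, hc⟩ => ⟨m, hm, pw_anti hE h hc⟩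

theorem sat_up {W : Set (σ →₀ ℕ)} (hW : IsUp W) (C : Set σ) : IsUp (sat W C) := by
  rintro c ⟨m, hm, hc⟩ b
  exact ⟨m, hm, by rw [add_right_comm]; exact hW _ hc b⟩

theorem exists_minimal_cover [Finite σ] {C : Set σ} (hC : IsCov E C) :
    ∃ D ⊆ C, Minimal (IsCov E) D :=
  exists_minimal_le_of_wellFoundedLT (IsCov E) C hC

/-- The filtration of the exponents by the symbolic powers. -/
def symFil [Finite σ] (hE : IsUp E) (h0 : 0 ∉ E) : EFil σ where
  U := symE E
  anti i j hij c hc C hC := sat_anti hE C hij (hc C hC)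
  zero := by
    ext c
    refine ⟨fun _ => trivial, fun _ C _ => ⟨0, fun _ _ => rfl, trivial⟩⟩
  up i c hc b C hC := sat_up (pw_up hE i) C c (hc C hC) b
  one h := by
    obtain ⟨C, -, hC⟩ := exists_minimal_cover (E := E) (C := Set.univ) fun e he => by
      obtain ⟨i, hi⟩ := Finsupp.support_nonempty_iff.2 (show e ≠ 0 from fun h => h0 (h ▸ he))
      exact ⟨i, trivial, Finsupp.mem_support_iff.1 hi⟩
    obtain ⟨m, hm, a, -, b, hb, hab⟩ := h C hC
    obtain ⟨i, hi, hne⟩ := hC.1 b hb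
    have := congrArg (fun f => f i) hab
    simp only [Finsupp.add_apply, Finsupp.zero_apply, hm i hi] at this
    omega
  div i c hc x hx C hC := by
    obtain ⟨m, hm, hcm⟩ := hc C hC
    refine ⟨m, hm, ?_⟩
    rw [tsub_add_eq_add_tsub (single_le_of_mem hx)]
    refine pw_div hE i _ hcm x ?_
    simp only [Finsupp.mem_support_iff, Finsupp.add_apply] at hx ⊢
    omega

theorem symE_nonempty (hne : E.Nonempty) (n : ℕ) : (symE E n).Nonempty := by
  have h : (pw E n).Nonempty := by
    induction n with
    | zero => exact ⟨0, trivial⟩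
    | succ n ih =>
      obtain ⟨a, ha⟩ := ih
      obtain ⟨b, hb⟩ := hne
      exact ⟨a + b, a, ha, b, hb, rfl⟩
  obtain ⟨c, hc⟩ := h
  exact ⟨c, fun C _ => ⟨0, fun _ _ => rfl, by simpa using hc⟩⟩

theorem mem_of_monomials {P : Ideal (MvPolynomial σ k)} {f : MvPolynomial σ k}
    (h : ∀ c, coeff c f ≠ 0 → ∀ r, monomial c r ∈ P) : f ∈ P := by
  rw [f.as_sum]
  exact Ideal.sum_mem _ fun c hc => h c (mem_support_iff.1 hc) _

theorem coeff_monomial_mem {c : σ →₀ ℕ} (hc : c ∈ E) (r : k) :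
    ∀ a, coeff a (monomial c r) ≠ 0 → a ∈ E := by
  classical
  intro a ha
  rw [coeff_monomial] at ha
  split_ifs at ha with h
  · exact h ▸ hc
  · exact absurd rfl ha

theorem exists_of_coeff_mul_ne {f g : MvPolynomial σ k} {c : σ →₀ ℕ} (h : coeff c (f * g) ≠ 0) :
    ∃ a b, a + b = c ∧ coeff a f ≠ 0 ∧ coeff b g ≠ 0 := by
  classical
  rw [coeff_mul] at h
  obtain ⟨p, hp, hne⟩ := Finset.exists_ne_zero_of_sum_ne_zero h
  exact ⟨p.1, p.2, Finset.HasAntidiagonal.mem_antidiagonal.1 hp, left_ne_zero_of_mul hne, right_ne_zero_of_mul hne⟩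

theorem mon_pow (hQ : Mon Q E) (n : ℕ) : Mon (Q ^ n) (pw E n) := by
  induction n with
  | zero => intro f; simp [pw]
  | succ n ih =>
    intro f
    rw [pow_succ]
    constructor
    · intro hf
      refine Submodule.mul_induction_on hf ?_ ?_
      · intro g hg h hh c hc
        obtain ⟨a, b, hab, ha, hb⟩ := exists_of_coeff_mul_ne hc
        exact ⟨a, (ih g).1 hg a ha, b, (hQ h).1 hh b hb, hab⟩
      · intro g h hg hh c hc
        by_cases hgc : coeff c g = 0
        · refine hh c fun h0 => hc ?_
          rw [coeff_add, hgc, h0, add_zero]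
        · exact hg c hgc
    · intro hf
      refine mem_of_monomials fun c hc r => ?_
      obtain ⟨a, ha, b, hb, rfl⟩ := hf c hc
      rw [show monomial (a + b) r = monomial a r * monomial b (1 : k) by simp [monomial_mul]]
      exact Ideal.mul_mem_mul ((ih _).2 (coeff_monomial_mem ha r))
        ((hQ _).2 (coeff_monomial_mem hb 1))

/-- If `T` is an up-set of exponents that is insensitive to multiplication by monomials free of the
variables in `D`, then polynomials with a term free of the variables in `D` act injectively modulo
the monomial ideal of `T`. A unique product among the terms of lowest degree in the variables of
`D` provides a term that cannot cancel. -/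
theorem mem_of_mul_mem [Fintype σ] {T : Set (σ →₀ ℕ)} {D : Set σ} (hT : IsUp T)
    (hT' : ∀ c m : σ →₀ ℕ, (∀ i ∈ D, m i = 0) → c + m ∈ T → c ∈ T) {s g : MvPolynomial σ k}
    (hs : ∃ m, coeff m s ≠ 0 ∧ ∀ i ∈ D, m i = 0) (h : ∀ c, coeff c (s * g) ≠ 0 → c ∈ T) :
    ∀ c, coeff c g ≠ 0 → c ∈ T := by
  classical
  by_contra! hcon
  let δ : (σ →₀ ℕ) → ℕ := fun c => ∑ i ∈ Finset.univ.filter (· ∈ D), c i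
  have hδ : ∀ a b, δ (a + b) = δ a + δ b := fun a b => by simp [δ, Finset.sum_add_distrib]
  have hδ0 : ∀ a, δ a = 0 ↔ ∀ i ∈ D, a i = 0 := fun a => by simp [δ]
  let A := g.support.filter (· ∉ T)
  have hA : A.Nonempty := by
    obtain ⟨c, hc, hcT⟩ := hcon
    exact ⟨c, Finset.mem_filter.2 ⟨mem_support_iff.2 hc, hcT⟩⟩
  obtain ⟨a₁, ha₁, hmin⟩ := Finset.exists_min_image A δ hA
  let A₀ := A.filter (fun a => δ a = δ a₁)
  let M₀ := s.support.filter (fun m => δ m = 0)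
  have hM₀ : M₀.Nonempty := by
    obtain ⟨m, hm, hm'⟩ := hs
    exact ⟨m, Finset.mem_filter.2 ⟨mem_support_iff.2 hm, (hδ0 m).2 hm'⟩⟩
  obtain ⟨m, hm, a, ha, huniq⟩ := UniqueSums.uniqueAdd_of_nonempty hM₀
    (show A₀.Nonempty from ⟨a₁, Finset.mem_filter.2 ⟨ha₁, rfl⟩⟩)
  obtain ⟨hms, hmδ⟩ := Finset.mem_filter.1 hm
  obtain ⟨haA, haδ⟩ := Finset.mem_filter.1 ha
  obtain ⟨hag, haT⟩ := Finset.mem_filter.1 haA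
  have hcT : m + a ∉ T := fun hc => haT (hT' a m ((hδ0 m).1 hmδ) (by rwa [add_comm]))
  refine hcT (h _ ?_)
  rw [coeff_mul, Finset.sum_eq_single (m, a)]
  · exact mul_ne_zero (mem_support_iff.1 hms) (mem_support_iff.1 hag)
  · rintro ⟨m', a'⟩ hma hne
    rw [Finset.HasAntidiagonal.mem_antidiagonal] at hma
    change m' + a' = m + a at hma
    by_contra hprod
    have hm' : coeff m' s ≠ 0 := left_ne_zero_of_mul hprod
    have ha' : coeff a' g ≠ 0 := right_ne_zero_of_mul hprod
    have haT' : a' ∉ T := fun h1 => hcT (by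
      rw [← hma, add_comm]; exact hT _ h1 _)
    have haA' : a' ∈ A := Finset.mem_filter.2 ⟨mem_support_iff.2 ha', haT'⟩
    have h1 := hmin a' haA'
    have h2 := congrArg δ hma
    rw [hδ, hδ] at h2
    obtain ⟨e1, e2⟩ := huniq (Finset.mem_filter.2 ⟨mem_support_iff.2 hm', by omega⟩)
      (Finset.mem_filter.2 ⟨haA', by omega⟩) hma
    exact hne (by rw [e1, e2])
  · intro h1
    rw [Finset.HasAntidiagonal.mem_antidiagonal] at h1
    exact absurd rfl h1

theorem mem_span_X {D : Set σ} {f : MvPolynomial σ k} :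
    f ∈ Ideal.span (X '' D) ↔ ∀ c, coeff c f ≠ 0 → ∃ i ∈ D, c i ≠ 0 := by
  rw [mem_ideal_span_X_image]
  simp only [mem_support_iff]

theorem isPrime_span_X [Fintype σ] (D : Set σ) :
    (Ideal.span (X '' D : Set (MvPolynomial σ k))).IsPrime := by
  refine ⟨fun h => ?_, fun {f g} hfg => ?_⟩
  · have h1 : (1 : MvPolynomial σ k) ∈ Ideal.span (X '' D : Set (MvPolynomial σ k)) := h ▸ trivial
    obtain ⟨i, -, hi⟩ := mem_span_X.1 h1 0 (by simp)
    simp at hi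
  · by_contra! hcon
    obtain ⟨hf, hg⟩ := hcon
    refine hg (mem_span_X.2 ?_)
    refine mem_of_mul_mem (D := D) (T := {c | ∃ i ∈ D, c i ≠ 0}) ?_ ?_ ?_ (mem_span_X.1 hfg)
    · rintro c ⟨i, hi, hc⟩ b
      exact ⟨i, hi, by rw [Finsupp.add_apply]; omega⟩
    · rintro c m hm ⟨i, hi, hc⟩
      exact ⟨i, hi, by rwa [Finsupp.add_apply, hm i hi, add_zero] at hc⟩
    · rw [mem_span_X] at hf
      push Not at hf
      exact hf

theorem mon_le_span_X (hQ : Mon Q E) {C : Set σ} (hC : IsCov E C) : Q ≤ Ideal.span (X '' C) :=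
  fun f hf => mem_span_X.2 fun c hc => hC c ((hQ f).1 hf c hc)

/-- Every prime containing a monomial ideal contains a prime generated by a minimal cover. -/
theorem exists_cover_le [Fintype σ] (hQ : Mon Q E) {P : Ideal (MvPolynomial σ k)} (hP : P.IsPrime)
    (hle : Q ≤ P) : ∃ C, Minimal (IsCov E) C ∧ Ideal.span (X '' C) ≤ P := by
  have hcov : IsCov E {i | (X i : MvPolynomial σ k) ∈ P} := by
    intro e he
    have h1 : monomial e (1 : k) ∈ P := hle ((hQ _).2 (coeff_monomial_mem he 1))
    rw [monomial_eq, C_1, one_mul, Finsupp.prod, hP.prod_mem_iff] at h1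
    obtain ⟨i, hi, hiP⟩ := h1
    exact ⟨i, hP.mem_of_pow_mem _ hiP, Finsupp.mem_support_iff.1 hi⟩
  obtain ⟨D, hD, hDm⟩ := exists_minimal_cover hcov
  refine ⟨D, hDm, ?_⟩
  rw [Ideal.span_le]
  rintro _ ⟨i, hi, rfl⟩
  exact hD hi

theorem minimalPrimes_iff [Fintype σ] (hQ : Mon Q E) (P : Ideal (MvPolynomial σ k)) :
    P ∈ Q.minimalPrimes ↔ ∃ C, Minimal (IsCov E) C ∧ P = Ideal.span (X '' C) := by
  classical
  constructor
  · intro hP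
    obtain ⟨C, hC, hle⟩ := exists_cover_le hQ hP.1.1 hP.1.2
    exact ⟨C, hC, le_antisymm (hP.2 ⟨isPrime_span_X C, mon_le_span_X hQ hC.1⟩ hle) hle⟩
  · rintro ⟨C, hC, rfl⟩
    refine ⟨⟨isPrime_span_X C, mon_le_span_X hQ hC.1⟩, fun P hP hle => ?_⟩
    obtain ⟨D, hD, hDP⟩ := exists_cover_le hQ hP.1 hP.2
    have hDC : D ⊆ C := by
      intro i hi
      have h1 : (X i : MvPolynomial σ k) ∈ Ideal.span (X '' C) :=
        hle (hDP (Ideal.subset_span ⟨i, hi, rfl⟩))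
      obtain ⟨j, hj, hne⟩ := mem_span_X.1 h1 (Finsupp.single i 1) (by simp)
      rw [Finsupp.single_apply] at hne
      split_ifs at hne with h2
      · exact h2 ▸ hj
      · exact absurd rfl hne
    have : C ⊆ D := hC.2 hD.1 hDC
    rw [Set.Subset.antisymm this hDC]
    exact hDP

/-- Localizing a monomial ideal at the prime generated by the variables in `D` and contracting back
amounts to discarding the variables outside `D`. -/
theorem mem_comap_localization [Fintype σ] {W : Set (σ →₀ ℕ)} (hW : IsUp W) (hQ : Mon Q W)
    {D : Set σ} [hP : (Ideal.span (X '' D : Set (MvPolynomial σ k))).IsPrime]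
    (f : MvPolynomial σ k) :
    f ∈ Ideal.comap (algebraMap (MvPolynomial σ k)
      (Localization.AtPrime (Ideal.span (X '' D : Set (MvPolynomial σ k)))))
      (Ideal.map (algebraMap (MvPolynomial σ k)
      (Localization.AtPrime (Ideal.span (X '' D : Set (MvPolynomial σ k))))) Q) ↔
    ∀ c, coeff c f ≠ 0 → c ∈ sat W D := by
  constructor
  · intro hf
    rw [Ideal.mem_comap, IsLocalization.mem_map_algebraMap_iff
      (Ideal.span (X '' D : Set (MvPolynomial σ k))).primeCompl] at hf
    obtain ⟨⟨⟨q, hq⟩, ⟨s, hs⟩⟩, hqs⟩ := hf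
    rw [← map_mul] at hqs
    have h1 := IsLocalization.injective (Localization.AtPrime (Ideal.span (X '' D : Set (MvPolynomial σ k))))
      (Ideal.primeCompl_le_nonZeroDivisors (Ideal.span (X '' D : Set (MvPolynomial σ k)))) hqs
    change f * s = q at h1
    refine mem_of_mul_mem (s := s) (D := D) (sat_up hW D) ?_ ?_ ?_
    · rintro c m hm ⟨m', hm', hc⟩
      exact ⟨m + m', fun i hi => by simp [hm i hi, hm' i hi], by rwa [← add_assoc]⟩
    · have hs' : ¬ s ∈ Ideal.span (X '' D) := hs
      rw [mem_span_X] at hs'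
      push Not at hs'
      exact hs'
    · intro c hc
      rw [mul_comm, h1] at hc
      exact ⟨0, fun _ _ => rfl, by simpa using (hQ q).1 hq c hc⟩
  · intro hf
    refine mem_of_monomials fun c hc r => ?_
    obtain ⟨m, hm, hcm⟩ := hf c hc
    rw [Ideal.mem_comap, IsLocalization.mem_map_algebraMap_iff
      (Ideal.span (X '' D : Set (MvPolynomial σ k))).primeCompl]
    have hms : monomial m (1 : k) ∉ Ideal.span (X '' D) := by
      classical
      intro h1
      obtain ⟨i, hi, hne⟩ := mem_span_X.1 h1 m (by rw [coeff_monomial, if_pos rfl]; exact one_ne_zero)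
      exact hne (hm i hi)
    refine ⟨⟨⟨monomial (c + m) r, (hQ _).2 (coeff_monomial_mem hcm r)⟩, ⟨monomial m 1, hms⟩⟩, ?_⟩
    rw [← map_mul]
    simp [monomial_mul]

/-- A symbolic power of a monomial ideal is monomial, with exponents determined by the minimal
covers. -/
theorem mon_symbPow [Fintype σ] (hE : IsUp E) (hQ : Mon Q E) (n : ℕ) :
    Mon (symbPow Q n) (symE E n) := by
  intro f
  unfold symbPow
  simp only [Submodule.mem_iInf]
  constructor
  · intro h c hc C hC
    have hP := (minimalPrimes_iff hQ _).2 ⟨C, hC, rfl⟩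
    have := hP.1.1
    exact (mem_comap_localization (pw_up hE n) (mon_pow hQ n) f).1 (h _ hP) c hc
  · intro h P hP
    obtain ⟨C, hC, rfl⟩ := (minimalPrimes_iff hQ _).1 hP
    have := hP.1.1
    exact (mem_comap_localization (pw_up hE n) (mon_pow hQ n) f).2 fun c hc => h c hc C hC

end Sym

/-! ### The binomial expansion of symbolic powers of sums -/

section Bin

variable {k : Type} [Field k] {σ τ : Type}

/-- The exponents of the monomials divisible by a monomial with exponent in `S`. -/
def upE (S : Set (σ →₀ ℕ)) : Set (σ →₀ ℕ) := {c | ∃ s ∈ S, s ≤ c}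

theorem upE_up (S : Set (σ →₀ ℕ)) : IsUp (upE S) := by
  rintro c ⟨s, hs, h⟩ b
  exact ⟨s, hs, h.trans le_self_add⟩

theorem mon_span (S : Set (σ →₀ ℕ)) :
    Mon (Ideal.span ((fun s => monomial s (1 : k)) '' S)) (upE S) := by
  intro f
  rw [mem_ideal_span_monomial_image]
  simp only [mem_support_iff]
  rfl

/-- The exponents of the sum of the extensions of two monomial ideals to the joint polynomial
ring. -/
def sumE (E : Set (σ →₀ ℕ)) (F : Set (τ →₀ ℕ)) : Set (σ ⊕ τ →₀ ℕ) :=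
  {c | ∃ a b, c = Finsupp.sumElim a b ∧ (a ∈ E ∨ b ∈ F)}

theorem sumElim_inj {a a' : σ →₀ ℕ} {b b' : τ →₀ ℕ} :
    Finsupp.sumElim a b = Finsupp.sumElim a' b' ↔ a = a' ∧ b = b' := by
  refine ⟨fun h => ?_, fun ⟨h, h'⟩ => by rw [h, h']⟩
  exact Prod.mk.inj (Finsupp.sumFinsuppEquivProdFinsupp.symm.injective
    (a₁ := (a, b)) (a₂ := (a', b')) h)

theorem exists_sumElim (c : σ ⊕ τ →₀ ℕ) : ∃ a b, c = Finsupp.sumElim a b :=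
  ⟨_, _, (Finsupp.comapDomain_sumElim_comapDomain c).symm⟩

variable {E : Set (σ →₀ ℕ)} {F : Set (τ →₀ ℕ)}

theorem sumElim_mem_sumE {a : σ →₀ ℕ} {b : τ →₀ ℕ} :
    Finsupp.sumElim a b ∈ sumE E F ↔ a ∈ E ∨ b ∈ F := by
  constructor
  · rintro ⟨a', b', h, h'⟩
    obtain ⟨rfl, rfl⟩ := sumElim_inj.1 h
    exact h'
  · exact fun h => ⟨a, b, rfl, h⟩

theorem sumE_up (hE : IsUp E) (hF : IsUp F) : IsUp (sumE E F) := by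
  rintro _ ⟨a, b, rfl, h⟩ c
  obtain ⟨a', b', rfl⟩ := exists_sumElim c
  rw [← Finsupp.sumElim_add, sumElim_mem_sumE]
  exact h.imp (fun h => hE _ h _) (fun h => hF _ h _)

theorem mon_sum (S : Set (σ →₀ ℕ)) (T : Set (τ →₀ ℕ)) :
    Mon (Ideal.map (rename Sum.inl : MvPolynomial σ k →ₐ[k] MvPolynomial (σ ⊕ τ) k)
        (Ideal.span ((fun s => monomial s (1 : k)) '' S)) +
      Ideal.map (rename Sum.inr : MvPolynomial τ k →ₐ[k] MvPolynomial (σ ⊕ τ) k)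
        (Ideal.span ((fun s => monomial s (1 : k)) '' T))) (sumE (upE S) (upE T)) := by
  have h1 : ∀ s : σ →₀ ℕ, (rename Sum.inl : MvPolynomial σ k →ₐ[k] MvPolynomial (σ ⊕ τ) k)
      (monomial s 1) = monomial (Finsupp.sumElim s 0) 1 := fun s => by
    rw [rename_monomial, Finsupp.sumElim_eq_add, Finsupp.mapDomain_zero, add_zero]
  have h2 : ∀ s : τ →₀ ℕ, (rename Sum.inr : MvPolynomial τ k →ₐ[k] MvPolynomial (σ ⊕ τ) k)
      (monomial s 1) = monomial (Finsupp.sumElim 0 s) 1 := fun s => by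
    rw [rename_monomial, Finsupp.sumElim_eq_add, Finsupp.mapDomain_zero, zero_add]
  have h3 : sumE (upE S) (upE T) = upE ((fun s => Finsupp.sumElim s (0 : τ →₀ ℕ)) '' S ∪
      (fun s => Finsupp.sumElim (0 : σ →₀ ℕ) s) '' T) := by
    have hle : ∀ (a a' : σ →₀ ℕ) (b b' : τ →₀ ℕ),
        Finsupp.sumElim a b ≤ Finsupp.sumElim a' b' ↔ a ≤ a' ∧ b ≤ b' := fun a a' b b' => by
      simp only [Finsupp.le_def, Finsupp.sumElim_apply, Sum.forall, Sum.elim_inl, Sum.elim_inr]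
    ext c
    obtain ⟨a, b, rfl⟩ := exists_sumElim c
    rw [sumElim_mem_sumE]
    constructor
    · rintro (⟨s, hs, h⟩ | ⟨s, hs, h⟩)
      · exact ⟨_, Or.inl ⟨s, hs, rfl⟩, (hle _ _ _ _).2 ⟨h, zero_le⟩⟩
      · exact ⟨_, Or.inr ⟨s, hs, rfl⟩, (hle _ _ _ _).2 ⟨zero_le, h⟩⟩
    · rintro ⟨_, ⟨s, hs, rfl⟩ | ⟨s, hs, rfl⟩, h⟩
      · exact Or.inl ⟨s, hs, ((hle _ _ _ _).1 h).1⟩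
      · exact Or.inr ⟨s, hs, ((hle _ _ _ _).1 h).2⟩
  rw [h3, Ideal.map_span, Ideal.map_span, Submodule.add_eq_sup, ← Ideal.span_union,
    Set.image_image, Set.image_image]
  convert mon_span (k := k) _ using 2
  rw [Set.image_union, Set.image_image, Set.image_image]
  congr 1
  · exact Set.image_congr fun s _ => h1 s
  · exact Set.image_congr fun s _ => h2 s

theorem mem_pw_sumE (hE : IsUp E) (hF : IsUp F) (n : ℕ) : ∀ (a : σ →₀ ℕ) (b : τ →₀ ℕ),
    Finsupp.sumElim a b ∈ pw (sumE E F) n ↔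
      ∃ i j, i + j = n ∧ a ∈ pw E i ∧ b ∈ pw F j := by
  induction n with
  | zero => exact fun a b => ⟨fun _ => ⟨0, 0, rfl, trivial, trivial⟩, fun _ => trivial⟩
  | succ n ih =>
    intro a b
    constructor
    · rintro ⟨c, hc, d, ⟨a₂, b₂, rfl, h⟩, hcd⟩
      obtain ⟨a₁, b₁, rfl⟩ := exists_sumElim c
      rw [← Finsupp.sumElim_add] at hcd
      obtain ⟨rfl, rfl⟩ := sumElim_inj.1 hcd
      obtain ⟨i, j, rfl, hi, hj⟩ := (ih _ _).1 hc
      rcases h with h | h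
      · exact ⟨i + 1, j, by omega, ⟨a₁, hi, a₂, h, rfl⟩, pw_up hF j _ hj _⟩
      · exact ⟨i, j + 1, by omega, pw_up hE i _ hi _, ⟨b₁, hj, b₂, h, rfl⟩⟩
    · rintro ⟨i, j, hij, hi, hj⟩
      cases i with
      | succ i =>
        obtain ⟨a₁, h₁, a₂, h₂, rfl⟩ := hi
        refine ⟨Finsupp.sumElim a₁ b, (ih _ _).2 ⟨i, j, by omega, h₁, hj⟩,
          Finsupp.sumElim a₂ 0, sumElim_mem_sumE.2 (Or.inl h₂), ?_⟩
        rw [← Finsupp.sumElim_add, add_zero]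
      | zero =>
        obtain rfl : j = n + 1 := by omega
        obtain ⟨b₁, h₁, b₂, h₂, rfl⟩ := hj
        refine ⟨Finsupp.sumElim a b₁, (ih _ _).2 ⟨0, n, by omega, trivial, h₁⟩,
          Finsupp.sumElim 0 b₂, sumElim_mem_sumE.2 (Or.inr h₂), ?_⟩
        rw [← Finsupp.sumElim_add, add_zero]

theorem mem_sat_sumE (hE : IsUp E) (hF : IsUp F) (n : ℕ) (C : Set (σ ⊕ τ)) (a : σ →₀ ℕ)
    (b : τ →₀ ℕ) : Finsupp.sumElim a b ∈ sat (pw (sumE E F) n) C ↔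
      ∃ i j, i + j = n ∧ a ∈ sat (pw E i) (Sum.inl ⁻¹' C) ∧ b ∈ sat (pw F j) (Sum.inr ⁻¹' C) := by
  constructor
  · rintro ⟨m, hm, h⟩
    obtain ⟨a', b', rfl⟩ := exists_sumElim m
    rw [← Finsupp.sumElim_add, mem_pw_sumE hE hF] at h
    obtain ⟨i, j, hij, hi, hj⟩ := h
    exact ⟨i, j, hij, ⟨a', fun x hx => hm (Sum.inl x) hx, hi⟩,
      ⟨b', fun x hx => hm (Sum.inr x) hx, hj⟩⟩
  · rintro ⟨i, j, hij, ⟨a', ha, hi⟩, ⟨b', hb, hj⟩⟩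
    refine ⟨Finsupp.sumElim a' b', ?_, ?_⟩
    · rintro (x | x) hx
      · exact ha x hx
      · exact hb x hx
    · rw [← Finsupp.sumElim_add, mem_pw_sumE hE hF]
      exact ⟨i, j, hij, hi, hj⟩

theorem isCov_sumE {C : Set (σ ⊕ τ)} :
    IsCov (sumE E F) C ↔ IsCov E (Sum.inl ⁻¹' C) ∧ IsCov F (Sum.inr ⁻¹' C) := by
  constructor
  · refine fun h => ⟨fun e he => ?_, fun e he => ?_⟩
    · obtain ⟨x | x, hx, hne⟩ := h (Finsupp.sumElim e 0) (sumElim_mem_sumE.2 (Or.inl he))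
      · exact ⟨x, hx, hne⟩
      · exact absurd rfl hne
    · obtain ⟨x | x, hx, hne⟩ := h (Finsupp.sumElim 0 e) (sumElim_mem_sumE.2 (Or.inr he))
      · exact absurd rfl hne
      · exact ⟨x, hx, hne⟩
  · rintro ⟨h1, h2⟩ _ ⟨a, b, rfl, h | h⟩
    · obtain ⟨x, hx, hne⟩ := h1 a h
      exact ⟨Sum.inl x, hx, hne⟩
    · obtain ⟨x, hx, hne⟩ := h2 b h
      exact ⟨Sum.inr x, hx, hne⟩

theorem preimage_inl (C₁ : Set σ) (C₂ : Set τ) :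
    (Sum.inl ⁻¹' (Sum.inl '' C₁ ∪ Sum.inr '' C₂) : Set σ) = C₁ := by
  ext; simp

theorem preimage_inr (C₁ : Set σ) (C₂ : Set τ) :
    (Sum.inr ⁻¹' (Sum.inl '' C₁ ∪ Sum.inr '' C₂) : Set τ) = C₂ := by
  ext; simp

theorem minimal_sumE {C₁ : Set σ} {C₂ : Set τ} (h1 : Minimal (IsCov E) C₁)
    (h2 : Minimal (IsCov F) C₂) :
    Minimal (IsCov (sumE E F)) (Sum.inl '' C₁ ∪ Sum.inr '' C₂) := by
  refine ⟨isCov_sumE.2 ⟨by rw [preimage_inl]; exact h1.1, by rw [preimage_inr]; exact h2.1⟩,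
    fun D hD hle => ?_⟩
  obtain ⟨hD1, hD2⟩ := isCov_sumE.1 hD
  have k1 := h1.2 hD1 (by
    rw [← preimage_inl C₁ C₂]; exact Set.preimage_mono hle)
  have k2 := h2.2 hD2 (by
    rw [← preimage_inr C₁ C₂]; exact Set.preimage_mono hle)
  rintro _ (⟨x, hx, rfl⟩ | ⟨x, hx, rfl⟩)
  · exact k1 hx
  · exact k2 hx

theorem minimal_of_sumE {C : Set (σ ⊕ τ)} (h : Minimal (IsCov (sumE E F)) C) :
    Minimal (IsCov E) (Sum.inl ⁻¹' C) ∧ Minimal (IsCov F) (Sum.inr ⁻¹' C) := by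
  obtain ⟨h1, h2⟩ := isCov_sumE.1 h.1
  refine ⟨⟨h1, fun D hD hle x hx => ?_⟩, ⟨h2, fun D hD hle x hx => ?_⟩⟩
  · have := h.2 (y := Sum.inl '' D ∪ Sum.inr '' (Sum.inr ⁻¹' C))
      (isCov_sumE.2 ⟨by rwa [preimage_inl], by rwa [preimage_inr]⟩) (by
        rintro _ (⟨y, hy, rfl⟩ | ⟨y, hy, rfl⟩)
        · exact hle hy
        · exact hy)
    rw [← preimage_inl D (Sum.inr ⁻¹' C)]
    exact this hx
  · have := h.2 (y := Sum.inl '' (Sum.inl ⁻¹' C) ∪ Sum.inr '' D)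
      (isCov_sumE.2 ⟨by rwa [preimage_inl], by rwa [preimage_inr]⟩) (by
        rintro _ (⟨y, hy, rfl⟩ | ⟨y, hy, rfl⟩)
        · exact hy
        · exact hle hy)
    rw [← preimage_inr (Sum.inl ⁻¹' C) D]
    exact this hx

/-- The binomial expansion `(I + J)^{(n)} = ∑ I^{(i)} J^{(n-i)}` on exponents. If `i` is the
largest order of `a`, witnessed by a minimal cover at which `a` is not of order `i + 1`, then
combining this cover with every minimal cover of `F` shows that `b` has order `n - i`. -/
theorem mem_symE_sumE (hE : IsUp E) (hF : IsUp F) (n : ℕ) (a : σ →₀ ℕ) (b : τ →₀ ℕ) :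
    Finsupp.sumElim a b ∈ symE (sumE E F) n ↔
      ∃ i j, i + j = n ∧ a ∈ symE E i ∧ b ∈ symE F j := by
  classical
  constructor
  · intro h
    have hex : a ∈ symE E 0 := fun C _ => ⟨0, fun _ _ => rfl, trivial⟩
    set i := Nat.findGreatest (fun i => a ∈ symE E i) n with hi
    have hin : i ≤ n := Nat.findGreatest_le n
    have hai : a ∈ symE E i := Nat.findGreatest_spec (P := fun i => a ∈ symE E i) (zero_le) hex
    refine ⟨i, n - i, by omega, hai, ?_⟩
    rcases hin.eq_or_lt with heq | hlt
    · rw [heq, Nat.sub_self]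
      exact fun C _ => ⟨0, fun _ _ => rfl, trivial⟩
    have hnot : a ∉ symE E (i + 1) :=
      Nat.findGreatest_is_greatest (P := fun i => a ∈ symE E i) (Nat.lt_succ_self _) hlt
    have hnot' : ∃ C₁, Minimal (IsCov E) C₁ ∧ a ∉ sat (pw E (i + 1)) C₁ := by
      by_contra! hcon
      exact hnot hcon
    obtain ⟨C₁, hC₁, ha⟩ := hnot'
    intro C₂ hC₂
    obtain ⟨s, t, hst, hs, ht⟩ := (mem_sat_sumE hE hF n _ a b).1 (h _ (minimal_sumE hC₁ hC₂))
    rw [preimage_inl] at hs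
    rw [preimage_inr] at ht
    have hsi : s ≤ i := by
      by_contra! hlt'
      exact ha (sat_anti hE C₁ hlt' hs)
    exact sat_anti hF C₂ (by omega) ht
  · rintro ⟨i, j, hij, ha, hb⟩ C hC
    obtain ⟨h1, h2⟩ := minimal_of_sumE hC
    exact (mem_sat_sumE hE hF n C a b).2 ⟨i, j, hij, ha _ h1, hb _ h2⟩

end Bin

/-! ### The depth formula -/

section Final

variable {k : Type} [Field k] {σ τ : Type} [Fintype σ] [Fintype τ] [DecidableEq σ] [DecidableEq τ]

theorem zero_notMem_of_ne_top {Q : Ideal (MvPolynomial σ k)} {E : Set (σ →₀ ℕ)} (hQ : Mon Q E)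
    (h : Q ≠ ⊤) : 0 ∉ E := fun h0 =>
  h ((Ideal.eq_top_iff_one Q).2 ((hQ _).2 (coeff_monomial_mem h0 1)))

theorem nonempty_of_ne_bot {Q : Ideal (MvPolynomial σ k)} {E : Set (σ →₀ ℕ)} (hQ : Mon Q E)
    (h : Q ≠ ⊥) : E.Nonempty := by
  by_contra hcon
  rw [Set.not_nonempty_iff_eq_empty] at hcon
  refine h ((Submodule.eq_bot_iff Q).2 fun f hf => ?_)
  ext c
  rw [coeff_zero]
  by_contra hne
  have := (hQ f).1 hf c hne
  rw [hcon] at this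
  exact this

theorem zero_notMem_symE {E : Set (σ →₀ ℕ)} (hE : IsUp E) (h0 : 0 ∉ E) {i : ℕ} (hi : 1 ≤ i) :
    0 ∉ symE E i := fun h => (symFil hE h0).one ((symFil hE h0).anti hi h)

/-- The Koszul complex of the polynomial ring itself is exact in positive degrees. -/
theorem kosz_ex_univ {o : σ → ℕ} (ho : Function.Injective o) {E : Set (σ →₀ ℕ)}
    (hE : E = Set.univ) {m : ℕ} (hm : 0 < m) : (kosz k ho).Ex (lft σ E) m := by
  subst hE
  intro u hu hu0
  have hu' := (mem_gr_lft ho).1 hu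
  have h1 := hh_homotopy_apply (u := u) ho fun F c hne => by
    obtain ⟨x, hx⟩ := Finset.card_pos.1 (show 0 < F.card by rw [(hu' F c hne).2]; exact hm)
    exact ⟨x, Finset.mem_union_left _ hx⟩
  rw [show kd k o u = 0 from hu0, map_zero, add_zero] at h1
  exact ⟨hh k o u, (mem_gr_lft ho).2 fun F c hne =>
    ⟨trivial, hh_deg (fun F c hne => (hu' F c hne).2) F c hne⟩, h1⟩

/-- The highest degrees `p i` in which the Koszul homology of the symbolic powers does not vanish,
with the value `0` for the unit ideal, and their relation to the depths. -/
theorem exists_degrees {o : σ → ℕ} (ho : Function.Injective o) {Q : Ideal (MvPolynomial σ k)}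
    {E : Set (σ →₀ ℕ)} (hQ : Mon Q E) (hE : IsUp E) (h0 : 0 ∉ E) (hne : E.Nonempty) :
    ∃ p : ℕ → ℕ, p 0 = 0 ∧
      (∀ i, 1 ≤ i → idealDepth (maxHomIdeal k σ) (MvPolynomial σ k ⧸ symbPow Q i) + (p i + 1) =
        Fintype.card σ ∧ ¬ (kosz k ho).Ex (lft σ (symE E i)) (p i)) ∧
      ∀ i m, p i < m → (kosz k ho).Ex (lft σ (symE E i)) m := by
  have key : ∀ i, ∃ p, (i = 0 → p = 0) ∧ (1 ≤ i →
      idealDepth (maxHomIdeal k σ) (MvPolynomial σ k ⧸ symbPow Q i) + (p + 1) =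
        Fintype.card σ ∧ ¬ (kosz k ho).Ex (lft σ (symE E i)) p) ∧
      ∀ m, p < m → (kosz k ho).Ex (lft σ (symE E i)) m := by
    intro i
    rcases Nat.eq_zero_or_pos i with rfl | hi
    · refine ⟨0, fun _ => rfl, fun h => absurd h (by omega), fun m hm => ?_⟩
      exact kosz_ex_univ ho (symFil hE h0).zero hm
    · obtain ⟨p, h1, h2, h3⟩ := depth_char ho (zero_notMem_symE hE h0 hi) (symE_nonempty hne i)
        (mon_symbPow hE hQ i)
      exact ⟨p, fun h => absurd h (by omega), fun _ => ⟨h1, h2⟩, h3⟩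
  choose p hp using key
  exact ⟨p, (hp 0).1 rfl, fun i => (hp i).2.1, fun i => (hp i).2.2⟩

/-- The filtration of the joint Koszul complex by the symbolic powers of the sum is the product
filtration. -/
theorem eqv_mem_lft {E : Set (σ →₀ ℕ)} {F : Set (τ →₀ ℕ)} (hE : IsUp E) (hF : IsUp F)
    (h0 : 0 ∉ E) (h0' : 0 ∉ F) {o : σ → ℕ} {o' : τ → ℕ} (ho : Function.Injective o)
    (ho' : Function.Injective o') (n : ℕ) (p : (Finset σ × (σ →₀ ℕ)) × (Finset τ × (τ →₀ ℕ))) :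
    eqv σ τ p ∈ lft (σ ⊕ τ) (symE (sumE E F) n) ↔
      p ∈ ((symFil hE h0).filt k ho).prod ((symFil hF h0').filt k ho') n := by
  obtain ⟨⟨G, c⟩, ⟨H, e⟩⟩ := p
  rw [eqv_apply]
  exact mem_symE_sumE hE hF n c e

end Final

/-- **Theorem 5.10(i)**: for nonzero proper *monomial* ideals `I ⊆ A = k[X]`, `J ⊆ B = k[Y]`
and `R = k[X,Y]`, over a field `k` of arbitrary characteristic, for all `n ≥ 1`,
`depth R/(I+J)^{(n)} = min_{i ∈ [1,n-1], j ∈ [1,n]} { depth A/I^{(n-i)} + depth B/J^{(i)} + 1,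
 depth A/I^{(n-j+1)} + depth B/J^{(j)} }`. -/
theorem depth_symbPow_sum_eq_of_monomial
    {k : Type} [Field k] {σ τ : Type} [Fintype σ] [Fintype τ]
    (I : Ideal (MvPolynomial σ k)) (J : Ideal (MvPolynomial τ k))
    (hIbot : I ≠ ⊥) (hItop : I ≠ ⊤) (hImon : IsMonomialIdeal I)
    (hJbot : J ≠ ⊥) (hJtop : J ≠ ⊤) (hJmon : IsMonomialIdeal J)
    (IR JR : Ideal (MvPolynomial (σ ⊕ τ) k))
    (hIR : IR = Ideal.map (rename Sum.inl : MvPolynomial σ k →ₐ[k] MvPolynomial (σ ⊕ τ) k) I)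
    (hJR : JR = Ideal.map (rename Sum.inr : MvPolynomial τ k →ₐ[k] MvPolynomial (σ ⊕ τ) k) J)
    (n : ℕ) (hn : 1 ≤ n) :
    idealDepth (maxHomIdeal k (σ ⊕ τ)) (MvPolynomial (σ ⊕ τ) k ⧸ symbPow (IR + JR) n) =
    sInf ({d | ∃ i, 1 ≤ i ∧ i ≤ n - 1 ∧
            d = idealDepth (maxHomIdeal k σ) (MvPolynomial σ k ⧸ symbPow I (n - i)) +
                idealDepth (maxHomIdeal k τ) (MvPolynomial τ k ⧸ symbPow J i) + 1} ∪
          {d | ∃ j, 1 ≤ j ∧ j ≤ n ∧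
            d = idealDepth (maxHomIdeal k σ) (MvPolynomial σ k ⧸ symbPow I (n - j + 1)) +
                idealDepth (maxHomIdeal k τ) (MvPolynomial τ k ⧸ symbPow J j)})  := by
  classical
  obtain ⟨S, hS⟩ := hImon
  obtain ⟨T, hT⟩ := hJmon
  have hI : Mon I (upE S) := hS ▸ mon_span S
  have hJ : Mon J (upE T) := hT ▸ mon_span T
  have hIJ : Mon (IR + JR) (sumE (upE S) (upE T)) := by
    rw [hIR, hJR, hS, hT]
    exact mon_sum S T
  have hE := upE_up S
  have hF := upE_up T
  have h0 := zero_notMem_of_ne_top hI hItop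
  have h0' := zero_notMem_of_ne_top hJ hJtop
  have hne := nonempty_of_ne_bot hI hIbot
  have hne' := nonempty_of_ne_bot hJ hJbot
  have hG : IsUp (sumE (upE S) (upE T)) := sumE_up hE hF
  have h0'' : 0 ∉ sumE (upE S) (upE T) := by
    rw [← Finsupp.sumElim_zero_zero, sumElim_mem_sumE]
    exact not_or.2 ⟨h0, h0'⟩
  have hne'' : (sumE (upE S) (upE T)).Nonempty :=
    ⟨Finsupp.sumElim hne.some 0, sumElim_mem_sumE.2 (Or.inl hne.some_mem)⟩
  -- the variables are ordered so that those of `A` precede those of `B`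
  let o : σ → ℕ := fun i => Fintype.equivFin σ i
  let o' : τ → ℕ := fun j => Fintype.equivFin τ j
  let o'' : σ ⊕ τ → ℕ := Sum.elim o fun j => Fintype.card σ + o' j
  have ho : Function.Injective o := Fin.val_injective.comp (Fintype.equivFin σ).injective
  have ho' : Function.Injective o' := Fin.val_injective.comp (Fintype.equivFin τ).injective
  have hlt : ∀ i, o i < Fintype.card σ := fun i => (Fintype.equivFin σ i).2
  have ho'' : Function.Injective o'' := by
    rintro (i | i) (j | j) h
    · exact congrArg _ (ho h)
    · have := hlt i
      change o i = Fintype.card σ + o' j at h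
      omega
    · have := hlt j
      change Fintype.card σ + o' i = o j at h
      omega
    · change Fintype.card σ + o' i = Fintype.card σ + o' j at h
      exact congrArg _ (ho' (by omega))
  obtain ⟨p, hp0, hp, hpx⟩ := exists_degrees (k := k) ho hI hE h0 hne
  obtain ⟨q, hq0, hq, hqx⟩ := exists_degrees (k := k) ho' hJ hF h0' hne'
  obtain ⟨P, hP, hPn, hPx⟩ := depth_char (k := k) ho'' (zero_notMem_symE hG h0'' hn)
    (symE_nonempty hne'' n) (mon_symbPow hG hIJ n)
  have hex : ∀ m, ((kosz k ho).tensor (kosz k ho')).Ex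
      (((symFil hE h0).filt k ho).prod ((symFil hF h0').filt k ho') n) m ↔
      (kosz k ho'').Ex (lft (σ ⊕ τ) (symE (sumE (upE S) (upE T)) n)) m :=
    kosz_tensor_ex ho ho' ho'' (fun i j => Iff.rfl)
      (fun i j => by change Fintype.card σ + o' i < Fintype.card σ + o' j ↔ _; omega)
      (fun i j => by have := hlt i; change o i < Fintype.card σ + o' j; omega)
      (eqv_mem_lft hE hF h0 h0' ho ho' n)
  have hle1 : ∀ i j, 1 ≤ i → 1 ≤ j → i + j = n → p i + q j ≤ P := by
    intro i j hi hj hij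
    by_contra! hcon
    subst hij
    exact Filt.not_ex_prod ((symFil hE h0).filt k ho) ((symFil hF h0').filt k ho') hi hj
      (hp i hi).2 (hq j hj).2 ((hex _).2 (hPx _ hcon))
  have hle2 : ∀ i j, 1 ≤ i → 1 ≤ j → i + j = n + 1 → p i + q j + 1 ≤ P := by
    intro i j hi hj hij
    by_contra! hcon
    exact Filt.not_ex_prod_succ ((symFil hE h0).filt k ho) ((symFil hF h0').filt k ho') hi hj hij
      (hp i hi).2 (hq j hj).2 ((hex _).2 (hPx _ hcon))
  rw [Fintype.card_sum] at hP
  change idealDepth (maxHomIdeal k (σ ⊕ τ)) (MvPolynomial (σ ⊕ τ) k ⧸ symbPow (IR + JR) n) + _ = _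
    at hP
  set D := idealDepth (maxHomIdeal k (σ ⊕ τ)) (MvPolynomial (σ ⊕ τ) k ⧸ symbPow (IR + JR) n)
  set Z : Set ℕ := _ ∪ _ with hZ
  change D = sInf Z
  have hZne : Z.Nonempty := ⟨_, Or.inr ⟨1, le_rfl, hn, rfl⟩⟩
  apply le_antisymm
  · rcases Nat.sInf_mem hZne with ⟨i, hi, hin, hd⟩ | ⟨j, hj, hjn, hd⟩
    · rw [hd]
      have e1 := (hp (n - i) (by omega)).1
      have e2 := (hq i hi).1
      have e3 := hle1 (n - i) i (by omega) hi (by omega)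
      omega
    · rw [hd]
      have e1 := (hp (n - j + 1) (by omega)).1
      have e2 := (hq j hj).1
      have e3 := hle2 (n - j + 1) j (by omega) hj (by omega)
      omega
  · -- `M` is the bound for the degrees of nonzero homology predicted by the formula
    obtain ⟨M, hM⟩ : ∃ M, M = Fintype.card σ + Fintype.card τ - 1 - sInf Z := ⟨_, rfl⟩
    have hM2 : ∀ i j, 1 ≤ i → 1 ≤ j → i + j = n + 1 → p i + q j + 1 ≤ M := by
      intro i j hi hj hij
      have e0 : sInf Z ≤ _ := Nat.sInf_le (Or.inr ⟨j, hj, by omega, rfl⟩)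
      rw [show n - j + 1 = i by omega] at e0
      have e1 := (hp i hi).1
      have e2 := (hq j hj).1
      omega
    have hM1 : ∀ i j, i + j = n → p i + q j ≤ M := by
      intro i j hij
      rcases Nat.eq_zero_or_pos i with rfl | hi
      · have := hM2 1 j le_rfl (by omega) (by omega)
        omega
      rcases Nat.eq_zero_or_pos j with rfl | hj
      · have := hM2 i 1 hi le_rfl (by omega)
        omega
      have e0 : sInf Z ≤ _ := Nat.sInf_le (Or.inl ⟨j, hj, by omega, rfl⟩)
      rw [show n - j = i by omega] at e0
      have e1 := (hp i hi).1
      have e2 := (hq j hj).1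
      omega
    have hPM : P ≤ M := by
      by_contra! hcon
      exact hPn ((hex _).1 (Filt.ex_prod ((symFil hE h0).filt k ho) ((symFil hF h0').filt k ho')
        p q hpx hqx hM1 hM2 hcon))
    have e0 := hM2 1 n le_rfl hn (by omega)
    omega
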